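/- arXiv:1903.09042 — 2 statements merged into one kernel-verified Lean document; each statement's English description precedes it below -/
import Mathlib

section
/- Let 1<α≤2, let λ₁* be the largest real zero of E_{α,α−1}(λ)=0, and let λ∈ℝ be such that E_{α,α−1}(λ)≠0. Then the Green's function G associated to the parameter λ satisfies G(t,s)>0 for all t,s∈(0,1) if and only if λ>λ₁*. -/
/-- The two-parameter Mittag-Leffler function `E_{α,β}(x) = ∑_{k=0}^∞ x^k / Γ(αk+β)`. -/
noncomputable def ML (α β x : ℝ) : ℝ := ∑' k : ℕ, x ^ k / Real.Gamma (α * k + β)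

/-- The Green's function of the mixed problem
`D^α u - λ u + y = 0`, `lim_{t→0⁺} t^{2-α}u(t) = 0`, `u'(1) = 0`. -/
noncomputable def greenG (α lam : ℝ) (t s : ℝ) : ℝ :=
  if s ≤ t then
    t ^ (α - 1) * ML α α (lam * t ^ α) * ML α (α - 1) (lam * (1 - s) ^ α) /
      ((1 - s) ^ (2 - α) * ML α (α - 1) lam) -
    (t - s) ^ (α - 1) * ML α α (lam * (t - s) ^ α)
  else
    t ^ (α - 1) * ML α α (lam * t ^ α) * ML α (α - 1) (lam * (1 - s) ^ α) /
      ((1 - s) ^ (2 - α) * ML α (α - 1) lam)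

open Filter Topology Set

namespace MLGreen

lemma gpos {α β : ℝ} (hα : 1 < α) (hβ : 0 < β) (k : ℕ) : 0 < Real.Gamma (α * k + β) := by
  apply Real.Gamma_pos_of_pos
  positivity

lemma gamma_ge {α β : ℝ} (hα : 1 < α) (hβ : 0 < β) (k : ℕ) :
    (Nat.factorial (k+1) : ℝ) ≤ Real.Gamma (α * (k+2 : ℕ) + β) := by
  have h := Real.Gamma_nat_eq_factorial (k+1)
  rw [← h]
  apply Real.Gamma_strictMonoOn_Ici.monotoneOn
  · simp only [mem_Ici]; push_cast; linarith [(Nat.cast_nonneg k : (0:ℝ) ≤ k)]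
  · simp only [mem_Ici]; push_cast; nlinarith [(Nat.cast_nonneg k : (0:ℝ) ≤ k)]
  · push_cast; nlinarith [(Nat.cast_nonneg k : (0:ℝ) ≤ k)]

lemma summ_norm {α β : ℝ} (hα : 1 < α) (hβ : 0 < β) (x : ℝ) :
    Summable (fun k : ℕ => |x| ^ k / Real.Gamma (α * k + β)) := by
  rw [← summable_nat_add_iff 2]
  have h1 : Summable (fun k : ℕ => |x| * (|x| ^ (k+1) / (Nat.factorial (k+1) : ℝ))) :=
    ((summable_nat_add_iff 1).2 (Real.summable_pow_div_factorial |x|)).mul_left _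
  refine Summable.of_nonneg_of_le (fun k => ?_) (fun k => ?_) h1
  · exact div_nonneg (by positivity) (gpos hα hβ _).le
  · have h2 := gamma_ge hα hβ k
    have h3 : (0:ℝ) < Nat.factorial (k+1) := by positivity
    calc |x| ^ (k+2) / Real.Gamma (α * (k+2 : ℕ) + β) ≤ |x| ^ (k+2) / (Nat.factorial (k+1) : ℝ) := by
          gcongr
      _ = _ := by ring

lemma summ {α β : ℝ} (hα : 1 < α) (hβ : 0 < β) (x : ℝ) :
    Summable (fun k : ℕ => x ^ k / Real.Gamma (α * k + β)) := by
  apply Summable.of_norm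
  refine (summ_norm hα hβ x).congr (fun k => ?_)
  rw [norm_div, norm_pow, Real.norm_eq_abs, Real.norm_eq_abs, abs_of_pos (gpos hα hβ k)]

lemma ML_analytic {α β : ℝ} (hα : 1 < α) (hβ : 0 < β) (x : ℝ) : AnalyticAt ℝ (ML α β) x := by
  set c : ℕ → ℝ := fun k => (Real.Gamma (α * k + β))⁻¹ with hc
  have hr : (FormalMultilinearSeries.ofScalars ℝ c).radius = ⊤ := by
    apply FormalMultilinearSeries.radius_eq_top_of_summable_norm
    intro r
    refine (summ_norm hα hβ r).congr (fun k => ?_)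
    rw [FormalMultilinearSeries.ofScalars_norm, hc, norm_inv, Real.norm_eq_abs,
      abs_of_pos (gpos hα hβ k), NNReal.abs_eq]
    field_simp
  have h := (FormalMultilinearSeries.ofScalars ℝ c).hasFPowerSeriesOnBall (by rw [hr]; simp)
  have he : (FormalMultilinearSeries.ofScalars ℝ c).sum = ML α β := by
    ext y
    have := congrFun (FormalMultilinearSeries.ofScalarsSum_eq_tsum (E := ℝ) c) y
    unfold FormalMultilinearSeries.ofScalarsSum at this
    rw [this]
    unfold ML
    apply tsum_congr
    intro k
    simp [hc]; field_simp
  rw [hr, he] at h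
  exact h.analyticAt_of_mem (by simp)

lemma ML_cont {α β : ℝ} (hα : 1 < α) (hβ : 0 < β) : Continuous (ML α β) :=
  continuous_iff_continuousAt.2 fun x => (ML_analytic hα hβ x).continuousAt

lemma ML_zero {α β : ℝ} : ML α β 0 = 1 / Real.Gamma β := by
  unfold ML
  rw [tsum_eq_single 0]
  · simp
  · intro k hk; simp [hk]

lemma ML_pos {α β : ℝ} (hα : 1 < α) (hβ : 0 < β) {x : ℝ} (hx : 0 ≤ x) : 0 < ML α β x := by
  unfold ML
  refine (summ hα hβ x).tsum_pos (fun k => ?_) 0 ?_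
  · exact div_nonneg (by positivity) (gpos hα hβ _).le
  · have := gpos hα hβ 0
    simp only [pow_zero]; positivity

lemma ML_pos_of {α lam1 : ℝ} (hα : 1 < α) 
    (h : IsGreatest {μ : ℝ | ML α (α - 1) μ = 0} lam1) {x : ℝ} (hx : lam1 < x) :
    0 < ML α (α-1) x := by
  have hβ : 0 < α - 1 := by linarith
  rcases le_or_gt 0 x with h0 | h0
  · exact ML_pos hα hβ h0
  by_contra hneg
  push Not at hneg
  have h1 := ML_pos hα hβ (le_refl 0)
  obtain ⟨y, hy, hy2⟩ := intermediate_value_Icc h0.le (ML_cont hα hβ).continuousOn ⟨hneg, h1.le⟩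
  have := h.2 hy2
  linarith [hy.1]

lemma lam1_neg {α lam1 : ℝ} (hα : 1 < α) 
    (h : IsGreatest {μ : ℝ | ML α (α - 1) μ = 0} lam1) : lam1 < 0 := by
  by_contra h0
  push Not at h0
  have := ML_pos hα (by linarith : 0 < α - 1) h0
  have h1 : ML α (α-1) lam1 = 0 := h.1
  linarith

/-- `e(t)` -/
noncomputable def ee (α lam t : ℝ) : ℝ := t ^ (α - 1) * ML α α (lam * t ^ α)
/-- The derivative of the function above. -/
noncomputable def ff (α lam t : ℝ) : ℝ := t ^ (α - 2) * ML α (α-1) (lam * t ^ α)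

lemma ML_rel {α : ℝ} (hα : 1 < α) (x : ℝ) :
    (α - 1) * ML α α x + α * x * deriv (ML α α) x = ML α (α-1) x := by
  have hd : HasDerivAt (ML α α) (∑' k : ℕ, (k * x ^ (k-1)) / Real.Gamma (α * k + α)) x := by
    set R := |x| + 1 with hR
    have hR0 : 1 ≤ R := by rw [hR]; linarith [abs_nonneg x]
    have hu : Summable (fun k : ℕ => |2 * R| ^ k / Real.Gamma (α * k + α)) :=
      summ_norm hα (by linarith) _
    refine hasDerivAt_tsum_of_isPreconnected (g := fun (k:ℕ) (y:ℝ) => y ^ k / Real.Gamma (α * k + α))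
      (g' := fun (k:ℕ) (y:ℝ) => (k * y ^ (k-1)) / Real.Gamma (α * k + α)) hu (t := Ioo (-R) R) isOpen_Ioo isPreconnected_Ioo ?_ ?_ (y₀ := 0) ?_ ?_ ?_
    · intro k y hy
      exact (hasDerivAt_pow k y).div_const _
    · intro k y hy
      have hg := gpos hα (by linarith : 0 < α) k
      rw [norm_div, Real.norm_eq_abs, Real.norm_eq_abs, abs_of_pos hg]
      gcongr
      rw [abs_mul, abs_pow, abs_of_nonneg (by positivity : (0:ℝ) ≤ 2 * R), mul_pow, Nat.abs_cast]
      have hy2 : |y| ≤ R := abs_le.2 ⟨hy.1.le, hy.2.le⟩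
      have h2 : (k:ℝ) ≤ 2 ^ k := by exact_mod_cast (Nat.lt_two_pow_self (n := k)).le
      have h3 : |y| ^ (k-1) ≤ R ^ k := 
        (pow_le_pow_left₀ (abs_nonneg _) hy2 _).trans (pow_le_pow_right₀ hR0 (by omega))
      gcongr
    · constructor <;> linarith
    · exact summ hα (by linarith) 0
    · have := abs_lt.1 (by rw [hR]; linarith : |x| < R); exact this
  rw [hd.deriv]
  have hs : Summable (fun k : ℕ => (k * x ^ (k-1)) / Real.Gamma (α * k + α)) := by
    apply Summable.of_norm
    set R := |x| + 1 with hR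
    have hR0 : 1 ≤ R := by rw [hR]; linarith [abs_nonneg x]
    have hu : Summable (fun k : ℕ => |2 * R| ^ k / Real.Gamma (α * k + α)) :=
      summ_norm hα (by linarith) _
    refine Summable.of_nonneg_of_le (fun k => norm_nonneg _) (fun k => ?_) hu
    have hg := gpos hα (by linarith : 0 < α) k
    rw [norm_div, Real.norm_eq_abs, Real.norm_eq_abs, abs_of_pos hg]
    gcongr
    rw [abs_mul, abs_pow, abs_of_nonneg (by positivity : (0:ℝ) ≤ 2 * R), mul_pow, Nat.abs_cast]
    have hy2 : |x| ≤ R := by linarith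
    have h2 : (k:ℝ) ≤ 2 ^ k := by exact_mod_cast (Nat.lt_two_pow_self (n := k)).le
    have h3 : |x| ^ (k-1) ≤ R ^ k := 
      (pow_le_pow_left₀ (abs_nonneg _) hy2 _).trans (pow_le_pow_right₀ hR0 (by omega))
    gcongr
  unfold ML
  rw [← tsum_mul_left, ← tsum_mul_left, ← ((summ hα (by linarith) x).mul_left _).tsum_add (hs.mul_left _)]
  apply tsum_congr
  intro k
  have hg := gpos hα (by linarith : 0 < α - 1) k
  have h1 : 0 < α * k + (α - 1) := by have : (0:ℝ) ≤ k := Nat.cast_nonneg k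
                                      nlinarith
  have h2 : Real.Gamma (α * k + α) = (α * k + (α - 1)) * Real.Gamma (α * k + (α - 1)) := by
    rw [← Real.Gamma_add_one h1.ne']; congr 1; ring
  rw [h2]
  rcases k with _ | k
  · simp; have : α - 1 ≠ 0 := by linarith
    field_simp
  · simp only [Nat.add_sub_cancel]
    field_simp
    ring

lemma ee_deriv {α : ℝ} (hα : 1 < α) (lam : ℝ) {t : ℝ} (ht : 0 < t) :
    HasDerivAt (ee α lam) (ff α lam t) t := by
  have h1 : HasDerivAt (fun t : ℝ => t ^ (α-1)) ((α-1) * t ^ (α-1-1)) t :=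
    Real.hasDerivAt_rpow_const (Or.inl ht.ne')
  have h2 : HasDerivAt (fun t : ℝ => lam * t ^ α) (lam * (α * t ^ (α-1))) t :=
    (Real.hasDerivAt_rpow_const (Or.inl ht.ne')).const_mul _
  have h3 := (ML_analytic hα (by linarith : 0 < α) (lam * t ^ α)).differentiableAt.hasDerivAt
  have h4 := h1.mul (h3.comp t h2)
  refine HasDerivAt.congr_deriv (f := ee α lam) h4 ?_
  unfold ff
  rw [← ML_rel hα]
  have e1 : t ^ (α - 1 - 1) = t ^ (α-2) := by congr 1; ring
  have e2 : t ^ (α - 1) = t ^ (α-2) * t := by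
    rw [← Real.rpow_add_one ht.ne']; congr 1; ring
  have e3 : t ^ α = t ^ (α-2) * t * t := by
    rw [← e2, ← Real.rpow_add_one ht.ne']; congr 1; ring
  simp only [Function.comp]
  rw [e1, e2]
  generalize deriv (ML α α) (lam * t ^ α) = D
  rw [e3]; ring

lemma ee_zero {α : ℝ} (hα : 1 < α) (lam : ℝ) : ee α lam 0 = 0 := by
  unfold ee
  rw [Real.zero_rpow (by linarith)]; simp

lemma ee_cont {α : ℝ} (hα : 1 < α) (lam : ℝ) : Continuous (ee α lam) := by
  unfold ee
  have h1 : Continuous fun t : ℝ => t ^ (α-1) := Real.continuous_rpow_const (by linarith)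
  have h2 : Continuous fun t : ℝ => t ^ α := Real.continuous_rpow_const (by linarith)
  exact h1.mul ((ML_cont hα (by linarith)).comp (continuous_const.mul h2))

lemma green_eq {α lam t s : ℝ} (hs : s < 1) : greenG α lam t s =
    if s ≤ t then ee α lam t * ff α lam (1-s) / ML α (α-1) lam - ee α lam (t-s)
    else ee α lam t * ff α lam (1-s) / ML α (α-1) lam := by
  have h : (1-s) ^ (2-α) = ((1-s) ^ (α-2))⁻¹ := by
    rw [← Real.rpow_neg (by linarith)]; congr 1; ring
  have h2 : (0:ℝ) < (1-s) ^ (α-2) := Real.rpow_pos_of_pos (by linarith) _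
  unfold greenG ee ff
  rw [h]
  have : ∀ A B C D : ℝ, A * B / ((D)⁻¹ * C) = A * (D * B) / C := by
    intro A B C D
    rw [div_mul_eq_div_div, div_inv_eq_mul]; ring
  rw [this]

open MeasureTheory intervalIntegral

lemma beta_congr (a b : ℝ) : ∀ u ∈ Icc (0:ℝ) 1,
    ((u:ℂ) ^ ((a:ℂ)-1) * (1 - (u:ℂ)) ^ ((b:ℂ)-1)) = ((u ^ (a-1) * (1-u) ^ (b-1) : ℝ) : ℂ) := by
  intro u hu
  rw [Complex.ofReal_mul, Complex.ofReal_cpow hu.1, Complex.ofReal_cpow (by linarith [hu.2])]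
  push_cast
  rfl

lemma beta_int {a b : ℝ} (ha : 0 < a) (hb : 0 < b) :
    IntervalIntegrable (fun u : ℝ => u ^ (a-1) * (1-u) ^ (b-1)) volume 0 1 := by
  have h := Complex.betaIntegral_convergent (u := (a:ℂ)) (v := (b:ℂ)) (by simpa) (by simpa)
  have h2 : IntervalIntegrable (fun u : ℝ => ((u ^ (a-1) * (1-u) ^ (b-1) : ℝ) : ℂ)) volume 0 1 := by
    refine h.congr ?_
    intro u hu
    rw [uIoc_of_le zero_le_one] at hu
    exact beta_congr a b u ⟨hu.1.le, hu.2⟩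
  rw [intervalIntegrable_iff] at h2 ⊢
  exact h2.re

lemma beta_val {a b : ℝ} (ha : 0 < a) (hb : 0 < b) :
    ∫ u in (0:ℝ)..1, u ^ (a-1) * (1-u) ^ (b-1) = 
      Real.Gamma a * Real.Gamma b / Real.Gamma (a+b) := by
  have h := Complex.betaIntegral_eq_Gamma_mul_div (a:ℂ) (b:ℂ) (by simpa) (by simpa)
  unfold Complex.betaIntegral at h
  rw [intervalIntegral.integral_congr (g := fun u : ℝ => ((u ^ (a-1) * (1-u) ^ (b-1) : ℝ) : ℂ))] at h
  · rw [intervalIntegral.integral_ofReal, ← Complex.ofReal_add, Complex.Gamma_ofReal, Complex.Gamma_ofReal, Complex.Gamma_ofReal] at h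
    exact_mod_cast h
  · intro u hu
    rw [uIcc_of_le zero_le_one] at hu
    exact beta_congr a b u hu

lemma ML_int_eq {α : ℝ} (hα : 1 < α) (x : ℝ) :
    ML α (α-1) x = 1 / Real.Gamma (α-1) + x / Real.Gamma (α-1) *
      ∫ u in (0:ℝ)..1, u ^ (α-1) * (1-u) ^ (α-2) * ML α α (x * u ^ α) := by
  have hb : 0 < α - 1 := by linarith
  have ha : 0 < α := by linarith
  have hG := Real.Gamma_pos_of_pos hb
  have hki : IntervalIntegrable (fun u : ℝ => u ^ (α-1) * (1-u) ^ (α-2)) volume 0 1 := by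
    have := beta_int ha hb
    have e : α - 1 - 1 = α - 2 := by ring
    rwa [e] at this
  have key := intervalIntegral.hasSum_integral_of_dominated_convergence (μ := volume)
    (a := (0:ℝ)) (b := 1)
    (F := fun (k:ℕ) (u:ℝ) => u ^ (α-1) * (1-u) ^ (α-2) * ((x * u ^ α) ^ k / Real.Gamma (α * k + α)))
    (f := fun u => u ^ (α-1) * (1-u) ^ (α-2) * ML α α (x * u ^ α))
    (fun k u => (u ^ (α-1) * (1-u) ^ (α-2)) * (|x| ^ k / Real.Gamma (α * k + α)))
    ?_ ?_ ?_ ?_ ?_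
  · have hterm : ∀ k : ℕ, ∫ u in (0:ℝ)..1, u ^ (α-1) * (1-u) ^ (α-2) * ((x * u ^ α) ^ k / Real.Gamma (α * k + α))
        = Real.Gamma (α-1) * (x ^ k / Real.Gamma (α * (k+1 : ℕ) + (α-1))) := by
      intro k
      have hk : 0 < α * k + α := by positivity
      have := beta_val hk hb
      have hg := Real.Gamma_pos_of_pos hk
      rw [intervalIntegral.integral_congr (g := fun u : ℝ => (x ^ k / Real.Gamma (α * k + α)) * (u ^ (α * k + α - 1) * (1-u) ^ (α-1-1))), intervalIntegral.integral_const_mul, this]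
      · push_cast
        rw [show α * k + α + (α - 1) = α * (k+1) + (α-1) by ring]
        field_simp
      · intro u hu
        rw [uIcc_of_le zero_le_one] at hu
        have e1 : u ^ (α * k + α - 1) = u ^ (α-1) * (u ^ α) ^ k := by
          rw [← Real.rpow_natCast (u ^ α), ← Real.rpow_mul hu.1, ← Real.rpow_add_of_nonneg hu.1 hb.le (by positivity)]
          congr 1; ring
        have e2 : α - 1 - 1 = α - 2 := by ring
        simp only
        rw [e1, e2, mul_pow]; ring
    simp_rw [hterm] at key
    rw [← key.tsum_eq, tsum_mul_left]
    unfold ML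
    rw [(summ hα hb x).tsum_eq_zero_add, ← tsum_mul_left, ← tsum_mul_left]
    congr 1
    · simp
    · apply tsum_congr; intro k
      rw [pow_succ]; field_simp
  · intro k
    have hm : Measurable (fun u : ℝ => u ^ (α-1) * (1-u) ^ (α-2) * ((x * u ^ α) ^ k / Real.Gamma (α * k + α))) := by
      fun_prop
    exact hm.aestronglyMeasurable
  · intro k
    refine ae_of_all _ (fun u hu => ?_)
    rw [uIoc_of_le zero_le_one] at hu
    have hg := gpos hα ha k
    have h0 : 0 ≤ u ^ (α-1) * (1-u) ^ (α-2) := mul_nonneg (Real.rpow_nonneg hu.1.le _) (Real.rpow_nonneg (by linarith [hu.2]) _)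
    rw [norm_mul, Real.norm_of_nonneg h0, norm_div, Real.norm_of_nonneg hg.le, norm_pow, norm_mul, Real.norm_eq_abs,
      Real.norm_of_nonneg (Real.rpow_nonneg hu.1.le _)]
    have : u ^ α ≤ 1 := Real.rpow_le_one hu.1.le hu.2 ha.le
    have h3 : |x| * u ^ α ≤ |x| := mul_le_of_le_one_right (abs_nonneg _) this
    have h4 : 0 ≤ |x| * u ^ α := mul_nonneg (abs_nonneg _) (Real.rpow_nonneg hu.1.le _)
    gcongr
  · refine ae_of_all _ (fun u hu => ?_)
    exact (summ_norm hα ha x).mul_left _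
  · simp_rw [tsum_mul_left]
    exact hki.mul_const _
  · refine ae_of_all _ (fun u hu => ?_)
    exact (summ hα ha _).hasSum.mul_left _

lemma ff_eq {α : ℝ} (hα : 1 < α) (lam : ℝ) {t : ℝ} (ht : 0 < t) :
    ff α lam t = t ^ (α-2) / Real.Gamma (α-1) + lam / Real.Gamma (α-1) * (t ^ (α-1) *
      ∫ u in (0:ℝ)..1, (1-u) ^ (α-2) * ee α lam (t*u)) := by
  unfold ff
  rw [ML_int_eq hα]
  have e2 : t ^ (α - 1) = t ^ (α-2) * t := by
    rw [← Real.rpow_add_one ht.ne']; congr 1; ring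
  have e3 : t ^ α = t ^ (α-1) * t := by
    rw [← Real.rpow_add_one ht.ne']; congr 1; ring
  have e4 : ∫ u in (0:ℝ)..1, (1-u) ^ (α-2) * ee α lam (t*u) = t ^ (α-1) * 
    ∫ u in (0:ℝ)..1, u ^ (α-1) * (1-u) ^ (α-2) * ML α α (lam * t ^ α * u ^ α) := by
    rw [← intervalIntegral.integral_const_mul]
    apply intervalIntegral.integral_congr
    intro u hu
    rw [uIcc_of_le zero_le_one] at hu
    simp only [ee]
    rw [Real.mul_rpow ht.le hu.1, Real.mul_rpow ht.le hu.1, ← mul_assoc lam]; ring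
  rw [e4]
  generalize (∫ u in (0:ℝ)..1, u ^ (α-1) * (1-u) ^ (α-2) * ML α α (lam * t ^ α * u ^ α)) = I
  rw [e3, e2]; ring

lemma ff_anti {α : ℝ} (hα : 1 < α) (hα2 : α ≤ 2) {lam : ℝ} (hl : lam ≤ 0)
    (hm : MonotoneOn (ee α lam) (Icc 0 1)) {t : ℝ} (ht : 0 < t) (ht1 : t ≤ 1) :
    ff α lam 1 ≤ ff α lam t := by
  rw [ff_eq hα lam ht, ff_eq hα lam one_pos]
  have hb : 0 < α - 1 := by linarith
  have hG := Real.Gamma_pos_of_pos hb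
  have h1 : (1:ℝ) ^ (α-2) ≤ t ^ (α-2) := by
    rw [Real.one_rpow]; exact Real.one_le_rpow_of_pos_of_le_one_of_nonpos ht ht1 (by linarith)
  have hk : IntervalIntegrable (fun u : ℝ => (1-u) ^ (α-2)) volume 0 1 := by
    have := beta_int one_pos hb
    have e : α - 1 - 1 = α - 2 := by ring
    rw [e] at this
    simpa using this
  have hint : ∀ t : ℝ, IntervalIntegrable (fun u : ℝ => (1-u) ^ (α-2) * ee α lam (t*u)) volume 0 1 := by
    intro t
    apply hk.mul_continuousOn
    exact ((ee_cont hα lam).comp (continuous_const.mul continuous_id)).continuousOn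
  have h0 : 0 ≤ ∫ u in (0:ℝ)..1, (1-u) ^ (α-2) * ee α lam (1*u) := by
    apply intervalIntegral.integral_nonneg zero_le_one
    intro u hu
    have : ee α lam 0 ≤ ee α lam (1*u) := hm ⟨le_rfl, zero_le_one⟩ (by simpa using hu) (by simpa using hu.1)
    rw [ee_zero hα] at this
    exact mul_nonneg (Real.rpow_nonneg (by linarith [hu.2]) _) this
  have h2 : ∫ u in (0:ℝ)..1, (1-u) ^ (α-2) * ee α lam (t*u) ≤ ∫ u in (0:ℝ)..1, (1-u) ^ (α-2) * ee α lam (1*u) := by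
    apply intervalIntegral.integral_mono_on zero_le_one (hint t) (hint 1)
    intro u hu
    apply mul_le_mul_of_nonneg_left _ (Real.rpow_nonneg (by linarith [hu.2]) _)
    apply hm
    · exact ⟨mul_nonneg ht.le hu.1, by nlinarith [hu.1, hu.2]⟩
    · simpa using hu
    · nlinarith [hu.1]
  have h3 : t ^ (α-1) ≤ 1 := Real.rpow_le_one ht.le ht1 hb.le
  have h3' : 0 ≤ t ^ (α-1) := Real.rpow_nonneg ht.le _
  have h4 : t ^ (α-1) * (∫ u in (0:ℝ)..1, (1-u) ^ (α-2) * ee α lam (t*u)) ≤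
     1 ^ (α-1) * ∫ u in (0:ℝ)..1, (1-u) ^ (α-2) * ee α lam (1*u) := by
    rw [Real.one_rpow]
    calc _ ≤ t ^ (α-1) * ∫ u in (0:ℝ)..1, (1-u) ^ (α-2) * ee α lam (1*u) := by gcongr
      _ ≤ _ := by gcongr
  have h5 : lam / Real.Gamma (α-1) ≤ 0 := div_nonpos_of_nonpos_of_nonneg hl hG.le
  have h6 := mul_le_mul_of_nonpos_left h4 h5
  have h7 : (1:ℝ) ^ (α-2) / Real.Gamma (α-1) ≤ t ^ (α-2) / Real.Gamma (α-1) := by gcongr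
  linarith

/-- `P x n = x (x+1) ⋯ (x+n-1) / n!` -/
noncomputable def P (x : ℝ) : ℕ → ℝ
  | 0 => 1
  | n + 1 => P x n * (x + n) / (n + 1)

lemma P_pos {x : ℝ} (hx : 0 < x) (n : ℕ) : 0 < P x n := by
  induction n with
  | zero => simp [P]
  | succ n ih => simp only [P]; positivity

lemma P_succ (x : ℝ) (n : ℕ) : (n + 1) * P x (n+1) = (x + n) * P x n := by
  simp only [P]
  have : (n:ℝ) + 1 ≠ 0 := by positivity
  field_simp

lemma P_zero (n : ℕ) : P 0 n = if n = 0 then 1 else 0 := by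
  induction n with
  | zero => simp [P]
  | succ n ih => 
    simp only [P, ih]
    by_cases h : n = 0 <;> simp [h]

lemma P_pascal (x : ℝ) (n : ℕ) : P (x+1) (n+1) = P x (n+1) + P (x+1) n := by
  induction n with
  | zero => simp [P]
  | succ n ih =>
    have h1 := P_succ (x+1) (n+1)
    have h2 := P_succ x (n+1)
    have h3 := P_succ (x+1) n
    push_cast at h1 h2 h3
    have h4 : (n:ℝ) + 1 + 1 ≠ 0 := by positivity
    apply mul_left_cancel₀ h4
    rw [h1, mul_add, h2]
    have h5 : P x (n+1) = P (x+1) (n+1) - P (x+1) n := by linarith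
    rw [h5]
    linear_combination (-1) * h3

lemma P_vand (x y : ℝ) (n : ℕ) :
    ∑ ij ∈ Finset.HasAntidiagonal.antidiagonal n, P x ij.1 * P y ij.2 = P (x+y) n := by
  induction n with
  | zero => simp [P]
  | succ n ih =>
    have h4 : (n:ℝ) + 1 ≠ 0 := by positivity
    apply mul_left_cancel₀ h4
    rw [P_succ, ← ih, Finset.mul_sum, Finset.mul_sum]
    have e1 : ∑ ij ∈ Finset.HasAntidiagonal.antidiagonal (n+1), ((n:ℝ)+1) * (P x ij.1 * P y ij.2) =
        ∑ ij ∈ Finset.HasAntidiagonal.antidiagonal (n+1), ((ij.1:ℝ) * P x ij.1 * P y ij.2) + 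
        ∑ ij ∈ Finset.HasAntidiagonal.antidiagonal (n+1), (P x ij.1 * ((ij.2 : ℝ) * P y ij.2)) := by
      rw [← Finset.sum_add_distrib]
      apply Finset.sum_congr rfl
      intro ij hij
      have : ((ij.1 + ij.2 : ℕ) : ℝ) = ((n+1 : ℕ) : ℝ) := by rw [Finset.HasAntidiagonal.mem_antidiagonal.1 hij]
      push_cast at this
      rw [← this]; ring
    rw [e1, Finset.Nat.sum_antidiagonal_succ, Finset.Nat.sum_antidiagonal_succ']
    simp only [Nat.cast_zero, zero_mul, mul_zero, zero_add]
    rw [← Finset.sum_add_distrib]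
    apply Finset.sum_congr rfl
    intro ij hij
    have : ((ij.1 + ij.2 : ℕ) : ℝ) = (n : ℝ) := by rw [Finset.HasAntidiagonal.mem_antidiagonal.1 hij]
    push_cast at this ⊢
    rw [P_succ, P_succ, ← this]; ring

lemma P_le_pow {p : ℝ} (hp : 1 ≤ p) (n : ℕ) : P (p+1) n ≤ ((n:ℝ)+1) ^ p := by
  induction n with
  | zero => simp [P]
  | succ n ih =>
    have h0 : (0:ℝ) < (n:ℝ) + 1 := by positivity
    have h1 := one_add_mul_self_le_rpow_one_add (s := 1 / ((n:ℝ)+1)) (by have : 0 ≤ 1 / ((n:ℝ)+1) := by positivity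
                                                                         linarith) hp
    have h2 : P (p+1) (n+1) = P (p+1) n * (1 + p * (1 / ((n:ℝ)+1))) := by
      simp only [P]; field_simp; ring
    have h3 : (((n+1:ℕ):ℝ)+1) ^ p = ((n:ℝ)+1) ^ p * (1 + 1 / ((n:ℝ)+1)) ^ p := by
      rw [← Real.mul_rpow h0.le (by positivity)]
      congr 1; push_cast; field_simp
    rw [h2, h3]
    have := P_pos (by linarith : 0 < p + 1) n
    gcongr

lemma P_bound {q : ℝ} (hq0 : 0 < q) (hq1 : q < 1) (m : ℕ) : ∀ p : ℝ, 1 + m ≤ p → p ≤ 2 + m → ∀ n : ℕ,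
    P (p+1) n ≤ ((1-q)⁻¹) ^ (2*n) * q ^ (-p) := by
  have hr0 : 0 < 1 - q := by linarith
  have hR : 1 ≤ (1-q)⁻¹ := (one_le_inv₀ hr0).2 (by linarith)
  induction m with
  | zero =>
    intro p hp1 hp2 n
    simp only [Nat.cast_zero, add_zero] at hp1 hp2
    refine (P_le_pow hp1 n).trans ?_
    have h1 : ((n:ℝ)+1) * (1-q)^n ≤ ∑ i ∈ Finset.range (n+1), (1-q)^i := by
      have : ∑ i ∈ Finset.range (n+1), (1-q)^n ≤ ∑ i ∈ Finset.range (n+1), (1-q)^i := by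
        apply Finset.sum_le_sum
        intro i hi
        exact pow_le_pow_of_le_one hr0.le (by linarith) (by have := Finset.mem_range.1 hi; omega)
      simpa using this
    have h2 := mul_neg_geom_sum (1-q) (n+1)
    have h3 : 0 < (1-q)^n := by positivity
    have h4 : 0 < (1-q)^(n+1) := by positivity
    have h5 : ((n:ℝ)+1) ≤ ((1-q)⁻¹) ^ n * q⁻¹ := by
      rw [inv_pow, ← mul_inv, ← one_div, le_div_iff₀ (by positivity)]
      nlinarith
    calc ((n:ℝ)+1) ^ p ≤ (((1-q)⁻¹) ^ n * q⁻¹) ^ p := by gcongr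
      _ = (((1-q)⁻¹) ^ n) ^ p * q ^ (-p) := by
        rw [Real.mul_rpow (by positivity) (by positivity), Real.inv_rpow hq0.le, Real.rpow_neg hq0.le]
      _ ≤ (((1-q)⁻¹) ^ n) ^ (2:ℝ) * q ^ (-p) := by
        gcongr
        exact one_le_pow₀ hR
      _ = _ := by
        rw [Real.rpow_two, ← pow_mul, mul_comm n 2]
  | succ m ih =>
    intro p hp1 hp2 n
    push_cast at hp1 hp2
    induction n with
    | zero =>
      simp only [P, mul_zero, pow_zero, one_mul]
      exact Real.one_le_rpow_of_pos_of_le_one_of_nonpos hq0 hq1.le (by linarith [(Nat.cast_nonneg m : (0:ℝ) ≤ m)])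
    | succ n ihn =>
      rw [P_pascal]
      have h1 := ih (p-1) (by linarith) (by linarith) (n+1)
      rw [sub_add_cancel] at h1
      have h2 : q ^ (-(p-1)) = q ^ (-p) * q := by
        rw [← Real.rpow_add_one hq0.ne']; congr 1; ring
      rw [h2] at h1
      have h3 : ((1-q)⁻¹) ^ (2*n) = ((1-q)⁻¹) ^ (2*(n+1)) * (1-q)^2 := by
        rw [mul_add, pow_add, mul_assoc, mul_one, ← mul_pow, inv_mul_cancel₀ hr0.ne', one_pow, mul_one]
      rw [h3] at ihn
      have h5 : 0 < ((1-q)⁻¹) ^ (2*(n+1)) * q ^ (-p) := by positivity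
      have h6 : (1-q)^2 + q ≤ 1 := by nlinarith
      have h7 := mul_le_mul_of_nonneg_left h6 h5.le
      linarith

lemma P_bound' {q p : ℝ} (hq0 : 0 < q) (hq1 : q < 1) (hp : 1 ≤ p) (n : ℕ) :
    P (p+1) n ≤ ((1-q)⁻¹) ^ (2*n) * q ^ (-p) := by
  refine P_bound hq0 hq1 ⌊p-1⌋₊ p ?_ ?_ n
  · linarith [Nat.floor_le (by linarith : 0 ≤ p - 1)]
  · linarith [Nat.lt_floor_add_one (p-1)]

lemma LC (a w : ℕ → ℝ) (α c : ℝ) (ha : ∀ n, 0 < a n) (hw : ∀ n, 0 ≤ w n) (hc : c < 1)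
    (rec : ∀ m, (1-c) * a (m+1) = α * a m - ∑ i ∈ Finset.range m, w i * a (m-1-i)) :
    ∀ m, ∀ i ≤ m, a i * a (m+1) ≤ a (i+1) * a m := by
  intro m
  induction m with
  | zero => intro i hi; obtain rfl : i = 0 := by omega
            linarith
  | succ m ih =>
    have hadj : a m * a (m+2) ≤ a (m+1) * a (m+1) := by
      have r1 := rec m
      have r2 := rec (m+1)
      rw [Finset.sum_range_succ] at r2
      simp only [Nat.add_sub_cancel] at r2
      have h1 : (∑ i ∈ Finset.range m, w i * a (m-1-i)) * a (m+1) ≤ (∑ i ∈ Finset.range m, w i * a (m-i)) * a m := by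
        rw [Finset.sum_mul, Finset.sum_mul]
        apply Finset.sum_le_sum
        intro i hi
        have hi := Finset.mem_range.1 hi
        have := ih (m-1-i) (by omega)
        rw [show m - 1 - i + 1 = m - i by omega] at this
        rw [mul_assoc, mul_assoc]
        exact mul_le_mul_of_nonneg_left this (hw i)
      have h2 : 0 ≤ w m * a (m-m) * a m := by
        have := hw m; have := ha (m-m); have := ha m; positivity
      have h3 : (1-c) * (a m * a (m+2)) ≤ (1-c) * (a (m+1) * a (m+1)) := by
        have e1 : (1-c) * (a m * a (m+2)) = a m * (α * a (m + 1) - (∑ x ∈ Finset.range m, w x * a (m - x) + w m * a (m - m))) := by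
          rw [← r2]; ring
        have e2 : (1-c) * (a (m+1) * a (m+1)) = a (m+1) * (α * a m - ∑ i ∈ Finset.range m, w i * a (m-1-i)) := by
          rw [← r1]; ring
        rw [e1, e2]; nlinarith
      exact le_of_mul_le_mul_left h3 (by linarith)
    intro i hi
    rcases Nat.lt_or_ge m i with h | h
    · obtain rfl : i = m+1 := by omega
      linarith
    · have h1 := ih i h
      have := ha m; have := ha (m+1); have := ha i; have := ha (i+1); have := ha (m+2)
      have h2 : a m * (a i * a (m+2)) ≤ a m * (a (i+1) * a (m+1)) := by
        have h3 := mul_le_mul_of_nonneg_left hadj (ha i).le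
        have h4 := mul_le_mul_of_nonneg_right h1 (ha (m+1)).le
        nlinarith
      exact le_of_mul_le_mul_left h2 (ha m)

lemma LC_shift (a : ℕ → ℝ) (ha : ∀ n, 0 < a n) 
    (h : ∀ m, ∀ i ≤ m, a i * a (m+1) ≤ a (i+1) * a m) (i m : ℕ) (him : i ≤ m) (d : ℕ) :
    a i * a (m+d) ≤ a (i+d) * a m := by
  induction d with
  | zero => simp
  | succ d ih =>
    have h1 := h (m+d) (i+d) (by omega)
    have p1 := ha (i+d)
    have p2 := ha (m+d)
    rw [← add_assoc, ← add_assoc]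
    have h2 : (a (i+d) * a (m+d)) * (a i * a (m+d+1)) ≤ (a (i+d) * a (m+d)) * (a (i+d+1) * a m) := by
      have h3 := mul_le_mul ih h1 (by have := ha (m+d+1); positivity) (by have := ha m; positivity)
      nlinarith
    exact le_of_mul_le_mul_left h2 (by positivity)

/-- discrete analogue of `e` -/
noncomputable def aa (α c : ℝ) (n : ℕ) : ℝ := ∑' k : ℕ, c ^ k * P (α * (k+1)) n

lemma aa_term_bound {α c q : ℝ} (hα : 1 < α) (hc : 0 < c) (hq0 : 0 < q) (hq1 : q < 1)
    (n k : ℕ) : c ^ (k+1) * P (α * ((k+1:ℕ)+1)) n ≤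
      ((1-q)⁻¹) ^ (2*n) * q ^ (1-α) * (c / q ^ α) ^ (k+1) := by
  have hk : (0:ℝ) ≤ k := Nat.cast_nonneg k
  have h := P_bound' (p := α * ((k+1:ℕ)+1) - 1) hq0 hq1 (by push_cast; nlinarith) n
  rw [sub_add_cancel] at h
  have e : q ^ (-(α * ((k+1:ℕ)+1) - 1)) = q ^ (1-α) * ((q ^ α)⁻¹) ^ (k+1) := by
    rw [inv_pow, ← Real.rpow_natCast (q ^ α), ← Real.rpow_mul hq0.le, ← Real.rpow_neg hq0.le, ← Real.rpow_add hq0]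
    congr 1; ring
  rw [e] at h
  calc _ ≤ c ^ (k+1) * (((1-q)⁻¹) ^ (2*n) * (q ^ (1-α) * ((q ^ α)⁻¹) ^ (k+1))) := by gcongr
    _ = _ := by rw [div_eq_mul_inv, mul_pow]; ring

lemma aa_summable {α c q : ℝ} (hα : 1 < α) (hc : 0 < c) (hq0 : 0 < q) (hq1 : q < 1)
    (hcq : c < q ^ α) (n : ℕ) : Summable (fun k : ℕ => c ^ k * P (α * (k+1)) n) := by
  rw [← summable_nat_add_iff 1]
  have h1 : c / q ^ α < 1 := (div_lt_one (by positivity)).2 hcq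
  have h0 : 0 ≤ c / q ^ α := by positivity
  have := ((summable_nat_add_iff 1).2 (summable_geometric_of_lt_one h0 h1)).mul_left (((1-q)⁻¹) ^ (2*n) * q ^ (1-α))
  refine Summable.of_nonneg_of_le (fun k => ?_) (fun k => aa_term_bound hα hc hq0 hq1 n k) this
  have := P_pos (x := α * ((k+1:ℕ)+1)) (by positivity) n
  positivity

lemma aa_pos {α c q : ℝ} (hα : 1 < α) (hc : 0 < c) (hq0 : 0 < q) (hq1 : q < 1)
    (hcq : c < q ^ α) (n : ℕ) : 0 < aa α c n := by
  have hp : ∀ k : ℕ, 0 < c ^ k * P (α * (k+1)) n := by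
    intro k
    have := P_pos (x := α * (k+1)) (by positivity) n
    positivity
  exact (aa_summable hα hc hq0 hq1 hcq n).tsum_pos (fun k => (hp k).le) 0 (hp 0)

lemma aa_rec0 {α c q : ℝ} (hα : 1 < α) (hc : 0 < c) (hq0 : 0 < q) (hq1 : q < 1)
    (hcq : c < q ^ α) (n : ℕ) (hn : n ≠ 0) :
    ∑ ij ∈ Finset.HasAntidiagonal.antidiagonal n, P (-α) ij.1 * aa α c ij.2 = c * aa α c n := by
  have hs := aa_summable hα hc hq0 hq1 hcq
  have h1 : ∀ ij : ℕ × ℕ, HasSum (fun k : ℕ => P (-α) ij.1 * (c ^ k * P (α * (k+1)) ij.2))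
      (P (-α) ij.1 * aa α c ij.2) := fun ij => (hs ij.2).hasSum.mul_left _
  have h2 := hasSum_sum (s := Finset.HasAntidiagonal.antidiagonal n) (fun ij _ => h1 ij)
  have e : ∀ k : ℕ, ∑ ij ∈ Finset.HasAntidiagonal.antidiagonal n,
      P (-α) ij.1 * (c ^ k * P (α * (k+1)) ij.2) = c ^ k * P (α * k) n := by
    intro k
    rw [show α * k = -α + α * (k+1) by ring, ← P_vand, Finset.mul_sum]
    apply Finset.sum_congr rfl
    intro ij _
    ring
  simp only [e] at h2
  have h3 : HasSum (fun k : ℕ => c * (c ^ k * P (α * (k+1)) n)) (c * aa α c n) :=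
    (hs n).hasSum.mul_left _
  have h4 := (hasSum_nat_add_iff' 1).2 h2
  have e3 : c ^ 0 * P (α * (0:ℕ)) n = 0 := by
    rw [Nat.cast_zero, mul_zero, P_zero, if_neg hn, mul_zero]
  rw [Finset.sum_range_one, e3, sub_zero] at h4
  refine h4.unique ?_
  refine h3.congr_fun ?_
  intro k
  push_cast
  ring

lemma w_nonneg {α : ℝ} (hα : 1 < α) (hα2 : α ≤ 2) (j : ℕ) : 0 ≤ P (-α) (j+2) := by
  induction j with
  | zero => simp [P]; nlinarith
  | succ j ih =>
    rw [show j + 1 + 2 = (j+2)+1 by ring, P]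
    have : 0 ≤ -α + ((j+2 : ℕ):ℝ) := by push_cast; linarith [(Nat.cast_nonneg j : (0:ℝ) ≤ j)]
    positivity

lemma aa_LC {α c q : ℝ} (hα : 1 < α) (hα2 : α ≤ 2) (hc : 0 < c) (hq0 : 0 < q) (hq1 : q < 1)
    (hcq : c < q ^ α) (i m : ℕ) (him : i ≤ m) (d : ℕ) :
    aa α c i * aa α c (m+d) ≤ aa α c (i+d) * aa α c m := by
  have hpos := aa_pos hα hc hq0 hq1 hcq
  refine LC_shift _ hpos ?_ i m him d
  refine LC (aa α c) (fun j => P (-α) (j+2)) α c hpos (w_nonneg hα hα2) ?_ ?_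
  · exact hcq.trans (Real.rpow_lt_one hq0.le hq1 (by linarith))
  · intro m
    have h := aa_rec0 hα hc hq0 hq1 hcq (m+1) (by omega)
    rw [Finset.Nat.sum_antidiagonal_eq_sum_range_succ_mk, Finset.sum_range_succ', Finset.sum_range_succ'] at h
    have e : ∑ k ∈ Finset.range m, P (-α) (k + 1 + 1) * aa α c (m + 1 - (k + 1 + 1)) = 
        ∑ i ∈ Finset.range m, P (-α) (i+2) * aa α c (m-1-i) := by
      apply Finset.sum_congr rfl
      intro k hk
      rw [show m + 1 - (k+1+1) = m - 1 - k by omega]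
    simp only at h
    rw [e] at h
    have e0 : P (-α) 0 = 1 := by simp [P]
    have e1 : P (-α) (0+1) = -α := by simp [P]
    rw [e0, e1] at h
    simp only [zero_add, Nat.add_sub_cancel, Nat.sub_zero] at h
    linarith

lemma P_lim {b : ℝ} (hb : 0 < b) :
    Tendsto (fun m : ℕ => P b m * (m:ℝ) ^ (1-b)) atTop (𝓝 (1 / Real.Gamma b)) := by
  have hprod : ∀ m : ℕ, P b m * (Nat.factorial m : ℝ) = ∏ j ∈ Finset.range m, (b + j) := by
    intro m
    induction m with
    | zero => simp [P]
    | succ m ih =>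
      rw [Finset.prod_range_succ, ← ih, Nat.factorial_succ]
      have := P_succ b m
      push_cast
      linear_combination (Nat.factorial m : ℝ) * this
  have h1 : Tendsto (fun m : ℕ => (m:ℝ) / (b + m)) atTop (𝓝 1) := by
    have := tendsto_natCast_div_add_atTop (𝕜 := ℝ) b
    simpa [add_comm] using this
  have h2 := h1.div (Real.GammaSeq_tendsto_Gamma b) (Real.Gamma_pos_of_pos hb).ne'
  refine h2.congr' ?_
  filter_upwards [eventually_gt_atTop 0] with m hm
  have hm' : (0:ℝ) < m := by exact_mod_cast hm
  simp only [Pi.div_apply, Real.GammaSeq]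
  rw [Finset.prod_range_succ, ← hprod]
  have := P_pos hb m
  have e : (m:ℝ) ^ (1-b) = m / m ^ b := by rw [Real.rpow_sub hm', Real.rpow_one]
  rw [e]
  have : 0 < (m:ℝ) ^ b := Real.rpow_pos_of_pos hm' _
  have : (0:ℝ) < Nat.factorial m := by positivity
  field_simp

lemma P_lim2 {b t : ℝ} (hb : 0 < b) (ht : 0 < t) (n : ℕ → ℕ)
    (hn : Tendsto (fun N : ℕ => (n N : ℝ) / N) atTop (𝓝 t)) :
    Tendsto (fun N : ℕ => P b (n N) * (N:ℝ) ^ (1-b)) atTop (𝓝 (t ^ (b-1) / Real.Gamma b)) := by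
  have hpos : ∀ᶠ N : ℕ in atTop, 0 < (n N : ℝ) / N := hn.eventually (lt_mem_nhds ht)
  have hinf : Tendsto n atTop atTop := by
    rw [← tendsto_natCast_atTop_iff (R := ℝ)]
    have := hn.pos_mul_atTop ht (tendsto_natCast_atTop_atTop (R := ℝ))
    refine this.congr' ?_
    filter_upwards [eventually_gt_atTop 0] with N hN
    have hN' : (0:ℝ) < N := by exact_mod_cast hN
    field_simp
  have h1 := (P_lim hb).comp hinf
  have h2 : Tendsto (fun N : ℕ => ((n N : ℝ) / N) ^ (b-1)) atTop (𝓝 (t ^ (b-1))) :=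
    hn.rpow_const (Or.inl ht.ne')
  have h3 := h1.mul h2
  rw [one_div_mul_eq_div] at h3
  refine h3.congr' ?_
  filter_upwards [eventually_gt_atTop 0, hpos] with N hN hp
  have hN' : (0:ℝ) < N := by exact_mod_cast hN
  have hnN : (0:ℝ) < n N := by
    by_contra h
    have : (n N : ℝ) = 0 := le_antisymm (not_lt.1 h) (Nat.cast_nonneg _)
    rw [this] at hp; simp at hp
  simp only [Function.comp]
  rw [Real.div_rpow hnN.le hN'.le, mul_assoc]
  congr 1
  rw [show 1 - b = -(b-1) by ring, Real.rpow_neg hnN.le, Real.rpow_neg hN'.le]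
  have : 0 < (n N : ℝ) ^ (b-1) := Real.rpow_pos_of_pos hnN _
  field_simp

lemma aa_lim {α lam t : ℝ} (hα : 1 < α) (hl : 0 < lam) (ht : 0 < t) (n : ℕ → ℕ)
    (hn : Tendsto (fun N : ℕ => (n N : ℝ) / N) atTop (𝓝 t)) :
    Tendsto (fun N : ℕ => (N:ℝ) ^ (1-α) * aa α (lam / (N:ℝ) ^ α) (n N)) atTop (𝓝 (ee α lam t)) := by
  set M := lam + 1 with hM
  have hM1 : 1 < M := by linarith
  have hM0 : 0 < M := by linarith
  have hMα : lam < M ^ α := by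
    have : M ^ (1:ℝ) ≤ M ^ α := Real.rpow_le_rpow_of_exponent_le hM1.le hα.le
    rw [Real.rpow_one] at this; linarith
  set T : ℕ → ℕ → ℝ := fun N k => lam ^ k * (P (α * (k+1)) (n N) * (N:ℝ) ^ (1 - α * (k+1))) with hT
  have hTlim : ∀ k, Tendsto (fun N => T N k) atTop (𝓝 (lam ^ k * (t ^ (α * (k+1) - 1) / Real.Gamma (α * (k+1))))) := by
    intro k
    exact (P_lim2 (by positivity) ht n hn).const_mul _
  have hTeq : ∀ N : ℕ, 0 < N → ∀ k, T N k = (N:ℝ) ^ (1-α) * ((lam / (N:ℝ) ^ α) ^ k * P (α * (k+1)) (n N)) := by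
    intro N hN k
    have hN' : (0:ℝ) < N := by exact_mod_cast hN
    simp only [hT]
    have e : (N:ℝ) ^ (1 - α * (k+1)) = (N:ℝ) ^ (1-α) * (((N:ℝ) ^ α) ^ k)⁻¹ := by
      rw [← Real.rpow_natCast, ← Real.rpow_mul hN'.le, ← Real.rpow_neg hN'.le, ← Real.rpow_add hN']
      congr 1; ring
    rw [e, div_pow]; ring
  have hlarge : ∀ᶠ N : ℕ in atTop, 2 * M ≤ (N:ℝ) :=
    (tendsto_natCast_atTop_atTop (R := ℝ)).eventually_ge_atTop (2 * M)
  have hnb : ∀ᶠ N : ℕ in atTop, (n N : ℝ) / N < t + 1 := hn.eventually (gt_mem_nhds (by linarith))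
  set C := Real.exp (4 * M * (t+1)) * M ^ (1-α) with hC
  have hbound : ∀ᶠ N : ℕ in atTop, ∀ k, ‖T N (k+1)‖ ≤ C * (lam / M ^ α) ^ (k+1) := by
    filter_upwards [hlarge, hnb, eventually_gt_atTop 0] with N h1 h2 hN k
    have hN' : (0:ℝ) < N := by exact_mod_cast hN
    have hNα : (0:ℝ) < (N:ℝ) ^ α := Real.rpow_pos_of_pos hN' _
    have hq0 : 0 < M / N := by positivity
    have hq2 : M / N ≤ 1/2 := by rw [div_le_iff₀ hN']; linarith
    have hq1 : M / N < 1 := by linarith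
    have hb := aa_term_bound hα (div_pos hl hNα) hq0 hq1 (n N) k
    have hp := P_pos (x := α * ((k+1:ℕ)+1)) (by positivity) (n N)
    rw [hTeq N hN, Real.norm_of_nonneg (by positivity)]
    have e1 : lam / (N:ℝ) ^ α / (M / N) ^ α = lam / M ^ α := by
      rw [Real.div_rpow hM0.le hN'.le]
      have : 0 < M ^ α := Real.rpow_pos_of_pos hM0 _
      field_simp
    have e2 : (N:ℝ) ^ (1-α) * (M / N) ^ (1-α) = M ^ (1-α) := by
      rw [← Real.mul_rpow hN'.le hq0.le]; congr 1; field_simp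
    rw [e1] at hb
    have h3 : ((1 - M/N)⁻¹) ^ (2 * n N) ≤ Real.exp (4 * M * (t+1)) := by
      have h4 : (1 - M/N)⁻¹ ≤ Real.exp (2 * (M/N)) := by
        have h5 : (1 - M/N)⁻¹ ≤ 1 + 2 * (M/N) := by
          rw [inv_le_iff_one_le_mul₀ (by linarith)]
          nlinarith
        linarith [Real.add_one_le_exp (2 * (M/N))]
      calc ((1 - M/N)⁻¹) ^ (2 * n N) ≤ (Real.exp (2 * (M/N))) ^ (2 * n N) := by
            have : 0 ≤ (1 - M/N)⁻¹ := inv_nonneg.2 (by linarith)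
            gcongr
        _ = Real.exp (4 * M * (n N / N)) := by
            rw [← Real.exp_nat_mul]; congr 1; push_cast; ring
        _ ≤ _ := by gcongr
    calc (N:ℝ) ^ (1-α) * ((lam / (N:ℝ) ^ α) ^ (k+1) * P (α * ((k+1:ℕ)+1)) (n N)) 
        ≤ (N:ℝ) ^ (1-α) * (((1 - M/N)⁻¹) ^ (2 * n N) * (M/N) ^ (1-α) * (lam / M ^ α) ^ (k+1)) := by
          gcongr
      _ = ((1 - M/N)⁻¹) ^ (2 * n N) * M ^ (1-α) * (lam / M ^ α) ^ (k+1) := by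
          rw [← e2]; ring
      _ ≤ _ := by
          rw [hC]; gcongr
  have hbs : Summable (fun k : ℕ => C * (lam / M ^ α) ^ (k+1)) := by
    apply Summable.mul_left
    exact (summable_nat_add_iff 1).2 (summable_geometric_of_lt_one (by positivity) ((div_lt_one (by positivity)).2 hMα))
  have htan := tendsto_tsum_of_dominated_convergence hbs (fun k => hTlim (k+1)) hbound
  have htot := (hTlim 0).add htan
  have hlimeq : lam ^ 0 * (t ^ (α * ((0:ℕ)+1) - 1) / Real.Gamma (α * ((0:ℕ)+1))) + 
      ∑' k : ℕ, lam ^ (k+1) * (t ^ (α * ((k+1:ℕ)+1) - 1) / Real.Gamma (α * ((k+1:ℕ)+1))) = ee α lam t := by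
    have hf : ∀ k : ℕ, lam ^ k * (t ^ (α * ((k:ℕ)+1) - 1) / Real.Gamma (α * ((k:ℕ)+1))) =
        t ^ (α-1) * ((lam * t ^ α) ^ k / Real.Gamma (α * k + α)) := by
      intro k
      have e : t ^ (α * ((k:ℕ)+1) - 1) = t ^ (α-1) * (t ^ α) ^ k := by
        rw [← Real.rpow_natCast, ← Real.rpow_mul ht.le, ← Real.rpow_add ht]
        congr 1; ring
      rw [e, mul_pow, show α * ((k:ℝ)+1) = α * k + α by ring]; ring
    have hsum : Summable (fun k : ℕ => lam ^ k * (t ^ (α * ((k:ℕ)+1) - 1) / Real.Gamma (α * ((k:ℕ)+1)))) := by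
      simp_rw [hf]
      exact (summ hα (by linarith) _).mul_left _
    rw [← hsum.tsum_eq_zero_add]
    simp_rw [hf]
    rw [tsum_mul_left]
    rfl
  rw [hlimeq] at htot
  refine htot.congr' ?_
  filter_upwards [hlarge, hbound, eventually_gt_atTop 0] with N h1 h2 hN
  have hsT : Summable (T N) := by
    rw [← summable_nat_add_iff 1]
    exact Summable.of_norm_bounded hbs h2
  rw [← hsT.tsum_eq_zero_add]
  unfold aa
  rw [← tsum_mul_left]
  exact tsum_congr (hTeq N hN)

lemma ee_LC {α lam x y d : ℝ} (hα : 1 < α) (hα2 : α ≤ 2) (hl : 0 < lam) (hy : 0 < y) (hxy : y ≤ x)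
    (hd : 0 ≤ d) : ee α lam y * ee α lam (x+d) ≤ ee α lam (y+d) * ee α lam x := by
  have fl : ∀ z : ℝ, 0 ≤ z → Tendsto (fun N : ℕ => (⌊z * N⌋₊ : ℝ) / N) atTop (𝓝 z) := by
    intro z hz
    exact (tendsto_nat_floor_mul_div_atTop hz).comp (tendsto_natCast_atTop_atTop (R := ℝ))
  have fl2 : ∀ z : ℝ, 0 ≤ z → Tendsto (fun N : ℕ => ((⌊z * N⌋₊ + ⌊d * N⌋₊ : ℕ) : ℝ) / N) atTop (𝓝 (z+d)) := by
    intro z hz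
    refine ((fl z hz).add (fl d hd)).congr (fun N => ?_)
    push_cast; ring
  have hx : 0 < x := by linarith
  have l1 := aa_lim hα hl hy _ (fl y hy.le)
  have l2 := aa_lim hα hl hx _ (fl x hx.le)
  have l3 := aa_lim hα hl (by linarith : 0 < x + d) _ (fl2 x hx.le)
  have l4 := aa_lim hα hl (by linarith : 0 < y + d) _ (fl2 y hy.le)
  refine le_of_tendsto_of_tendsto (l1.mul l3) (l4.mul l2) ?_
  have hlarge : ∀ᶠ N : ℕ in atTop, 2 * (lam + 1) ≤ (N:ℝ) :=
    (tendsto_natCast_atTop_atTop (R := ℝ)).eventually_ge_atTop _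
  filter_upwards [hlarge] with N h1
  have hN' : (0:ℝ) < N := by linarith
  have hM1 : 1 < lam + 1 := by linarith
  have hM0 : 0 < lam + 1 := by linarith
  have hMα : lam < (lam+1) ^ α := by
    have : (lam+1) ^ (1:ℝ) ≤ (lam+1) ^ α := Real.rpow_le_rpow_of_exponent_le hM1.le hα.le
    rw [Real.rpow_one] at this; linarith
  have hNα : (0:ℝ) < (N:ℝ) ^ α := Real.rpow_pos_of_pos hN' _
  have h := aa_LC (q := (lam+1)/N) hα hα2 (div_pos hl hNα) (by positivity) 
    (by rw [div_lt_one hN']; linarith) (by rw [Real.div_rpow hM0.le hN'.le]; gcongr)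
    ⌊y * N⌋₊ ⌊x * N⌋₊ (Nat.floor_le_floor (by gcongr)) ⌊d * N⌋₊
  have h0 : 0 ≤ ((N:ℝ) ^ (1-α)) * ((N:ℝ) ^ (1-α)) := by positivity
  have := mul_le_mul_of_nonneg_left h h0
  linarith

lemma ff_LC {α lam x y : ℝ} (hα : 1 < α) (hα2 : α ≤ 2) (hl : 0 < lam) (hy : 0 < y) (hxy : y ≤ x) :
    ee α lam y * ff α lam x ≤ ff α lam y * ee α lam x := by
  have hx : 0 < x := by linarith
  have d1 : HasDerivAt (fun d => ee α lam (x+d)) (ff α lam x) 0 := by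
    have := ee_deriv hα lam hx
    rw [← add_zero x] at this
    simpa using this.comp_const_add x 0
  have d2 : HasDerivAt (fun d => ee α lam (y+d)) (ff α lam y) 0 := by
    have := ee_deriv hα lam hy
    rw [← add_zero y] at this
    simpa using this.comp_const_add y 0
  have d3 := (d2.mul_const (ee α lam x)).sub (d1.const_mul (ee α lam y))
  have h4 := d3.tendsto_slope_zero_right
  have : 0 ≤ ff α lam y * ee α lam x - ee α lam y * ff α lam x := by
    refine ge_of_tendsto h4 ?_
    filter_upwards [self_mem_nhdsWithin] with d hd
    have hd' : (0:ℝ) < d := hd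
    have := ee_LC hα hα2 hl hy hxy hd'.le
    simp only [Pi.sub_apply, zero_add, add_zero, smul_eq_mul]
    apply mul_nonneg (by positivity)
    linarith
  linarith

lemma ee_pos {α lam t : ℝ} (hα : 1 < α) (hl : 0 ≤ lam) (ht : 0 < t) : 0 < ee α lam t := by
  unfold ee
  have h1 := Real.rpow_pos_of_pos ht (α-1)
  have h2 := Real.rpow_pos_of_pos ht α
  have := ML_pos hα (by linarith : 0 < α) (by positivity : 0 ≤ lam * t ^ α)
  positivity

lemma ff_pos {α lam t : ℝ} (hα : 1 < α) (hl : 0 ≤ lam) (ht : 0 < t) : 0 < ff α lam t := by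
  unfold ff
  have h1 := Real.rpow_pos_of_pos ht (α-2)
  have h2 := Real.rpow_pos_of_pos ht α
  have := ML_pos hα (by linarith : 0 < α - 1) (by positivity : 0 ≤ lam * t ^ α)
  positivity

lemma rpow_analytic {t : ℝ} (ht : 0 < t) (p : ℝ) : AnalyticAt ℝ (fun t : ℝ => t ^ p) t :=
  (Real.contDiffAt_rpow_const_of_ne ht.ne').analyticAt

/-- `f/e` is not constant on any interval. -/
lemma ff_LC_strict {α lam x y : ℝ} (hα : 1 < α) (hα2 : α ≤ 2) (hl : 0 < lam) (hy : 0 < y)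
    (hxy : y < x) : ee α lam y * ff α lam x < ff α lam y * ee α lam x := by
  refine lt_of_le_of_ne (ff_LC hα hα2 hl hy hxy.le) ?_
  intro heq
  have hx : 0 < x := by linarith
  have pex := ee_pos hα hl.le hx
  have pey := ee_pos hα hl.le hy
  set c := ff α lam x / ee α lam x with hc
  have hfx : ff α lam x = c * ee α lam x := by rw [hc]; field_simp
  have hfy : ff α lam y = c * ee α lam y := by
    rw [hfx] at heq
    apply mul_right_cancel₀ pex.ne'
    rw [← heq]; ring
  have hcon : ∀ z ∈ Ioo y x, ff α lam z = c * ee α lam z := by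
    intro z hz
    have pz : 0 < z := hy.trans hz.1
    have pez := ee_pos hα hl.le pz
    have h1 := ff_LC hα hα2 hl hy hz.1.le
    have h2 := ff_LC hα hα2 hl pz hz.2.le
    rw [hfy] at h1
    rw [hfx] at h2
    apply le_antisymm
    · apply le_of_mul_le_mul_left _ pey; linarith
    · apply le_of_mul_le_mul_right _ pex; linarith
  set g : ℝ → ℝ := fun z => ML α (α-1) (lam * z ^ α) - c * (z * ML α α (lam * z ^ α)) with hg
  have hga : AnalyticOnNhd ℝ g (Ioi 0) := by
    intro z hz
    have hp : AnalyticAt ℝ (fun z : ℝ => lam * z ^ α) z := analyticAt_const.mul (rpow_analytic hz α)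
    have a1 : AnalyticAt ℝ (fun z : ℝ => ML α (α-1) (lam * z ^ α)) z :=
      AnalyticAt.fun_comp (ML_analytic hα (by linarith) _) hp
    have a2 : AnalyticAt ℝ (fun z : ℝ => ML α α (lam * z ^ α)) z :=
      AnalyticAt.fun_comp (ML_analytic hα (by linarith) _) hp
    exact a1.sub (analyticAt_const.mul (analyticAt_id.mul a2))
  have hrel : ∀ z : ℝ, 0 < z → ff α lam z = c * ee α lam z → g z = 0 := by
    intro z hz h
    unfold ff ee at h
    have e2 : z ^ (α - 1) = z ^ (α-2) * z := by
      rw [← Real.rpow_add_one hz.ne']; congr 1; ring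
    rw [e2] at h
    have hp := Real.rpow_pos_of_pos hz (α-2)
    have : z ^ (α-2) * ML α (α-1) (lam * z ^ α) = z ^ (α-2) * (c * (z * ML α α (lam * z ^ α))) := by
      rw [h]; ring
    have := mul_left_cancel₀ hp.ne' this
    simp only [hg]; linarith
  have hmid : (y+x)/2 ∈ Ioo y x := ⟨by linarith, by linarith⟩
  have hev : g =ᶠ[𝓝 ((y+x)/2)] 0 := by
    filter_upwards [isOpen_Ioo.mem_nhds hmid] with z hz
    exact hrel z (hy.trans hz.1) (hcon z hz)
  have hz := hga.eqOn_zero_of_preconnected_of_eventuallyEq_zero isPreconnected_Ioi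
    (show (y+x)/2 ∈ Ioi (0:ℝ) from by simp only [mem_Ioi]; linarith) hev
  have hgc : Continuous g := by
    have h2 : Continuous fun t : ℝ => t ^ α := Real.continuous_rpow_const (by linarith)
    have h3 : Continuous fun t : ℝ => lam * t ^ α := continuous_const.mul h2
    exact ((ML_cont hα (by linarith)).comp h3).sub (continuous_const.mul (continuous_id.mul ((ML_cont hα (by linarith)).comp h3)))
  have hg0 : g 0 = 0 := by
    have t1 : Tendsto g (𝓝[>] 0) (𝓝 (g 0)) := hgc.continuousAt.tendsto.mono_left nhdsWithin_le_nhds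
    have t2 : Tendsto g (𝓝[>] 0) (𝓝 0) := by
      refine tendsto_const_nhds.congr' ?_
      filter_upwards [self_mem_nhdsWithin] with z hz'
      exact (hz hz').symm
    exact tendsto_nhds_unique t1 t2
  have hpos := ML_pos hα (by linarith : 0 < α - 1) (le_refl 0)
  simp only [hg, Real.zero_rpow (by linarith : α ≠ 0), mul_zero, zero_mul, sub_zero] at hg0
  linarith

lemma ff_one (α lam : ℝ) : ff α lam 1 = ML α (α-1) lam := by simp [ff]

lemma green_pos {α lam lam1 : ℝ} (hα : 1 < α) (hα2 : α ≤ 2)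
    (h : IsGreatest {μ : ℝ | ML α (α - 1) μ = 0} lam1) (hlt : lam1 < lam) {t s : ℝ}
    (ht : t ∈ Ioo (0:ℝ) 1) (hs : s ∈ Ioo (0:ℝ) 1) : 0 < greenG α lam t s := by
  have hneg := lam1_neg hα h
  have hf : ∀ z : ℝ, 0 < z → z ≤ 1 → 0 < ff α lam z := by
    intro z hz hz1
    have h1 := Real.rpow_pos_of_pos hz (α-2)
    have h2 := Real.rpow_pos_of_pos hz α
    have h3 : z ^ α ≤ 1 := Real.rpow_le_one hz.le hz1 (by linarith)
    refine mul_pos h1 (ML_pos_of hα h ?_)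
    rcases le_or_gt 0 lam with h0 | h0
    · have : 0 ≤ lam * z ^ α := by positivity
      linarith
    · nlinarith
  have hmono : StrictMonoOn (ee α lam) (Icc 0 1) := by
    apply strictMonoOn_of_deriv_pos (convex_Icc 0 1) (ee_cont hα lam).continuousOn
    intro z hz
    rw [interior_Icc] at hz
    rw [(ee_deriv hα lam hz.1).deriv]
    exact hf z hz.1 hz.2.le
  have he : ∀ z : ℝ, 0 < z → z ≤ 1 → 0 < ee α lam z := by
    intro z hz hz1
    have := hmono ⟨le_rfl, zero_le_one⟩ ⟨hz.le, hz1⟩ hz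
    rwa [ee_zero hα] at this
  have f1 := hf 1 one_pos le_rfl
  have fs := hf (1-s) (by linarith [hs.2]) (by linarith [hs.1])
  have et := he t ht.1 ht.2.le
  rw [green_eq hs.2, ← ff_one]
  split_ifs with hst
  · rw [sub_pos, lt_div_iff₀ f1]
    rcases le_or_gt lam 0 with h0 | h0
    · have h1 := ff_anti hα hα2 h0 hmono.monotoneOn (t := 1-s) (by linarith [hs.2]) (by linarith [hs.1])
      have h2 : ee α lam (t-s) < ee α lam t :=
        hmono ⟨by linarith, by linarith [ht.2, hs.1]⟩ ⟨ht.1.le, ht.2.le⟩ (by linarith [hs.1])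
      calc ee α lam (t-s) * ff α lam 1 < ee α lam t * ff α lam 1 := by gcongr
        _ ≤ _ := by gcongr
    · rcases hst.lt_or_eq with hst | hst
      · have h1 := ee_LC (x := 1-s) (y := t-s) (d := s) hα hα2 h0 (by linarith) (by linarith [ht.2]) hs.1.le
        rw [sub_add_cancel, sub_add_cancel] at h1
        have h2 := ff_LC_strict (x := 1) (y := 1-s) hα hα2 h0 (by linarith [hs.2]) (by linarith [hs.1])
        have e1 := he 1 one_pos le_rfl
        apply lt_of_mul_lt_mul_left _ e1.le
        calc ee α lam 1 * (ee α lam (t-s) * ff α lam 1) = (ee α lam (t-s) * ee α lam 1) * ff α lam 1 := by ring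
          _ ≤ (ee α lam t * ee α lam (1-s)) * ff α lam 1 := by gcongr
          _ = ee α lam t * (ee α lam (1-s) * ff α lam 1) := by ring
          _ < ee α lam t * (ff α lam (1-s) * ee α lam 1) := by gcongr
          _ = _ := by ring
      · rw [show t - s = 0 by linarith, ee_zero hα, zero_mul]; positivity
  · positivity

end MLGreen

/-- With `λ₁*` the largest real zero of `E_{α,α-1}` and `E_{α,α-1}(λ) ≠ 0`, the Green's
function satisfies `G(t,s) > 0` for all `t,s ∈ (0,1)` if and only if `λ > λ₁*`. -/
theorem stmt7 (α lam lam1 : ℝ) (hα1 : 1 < α) (hα2 : α ≤ 2)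
    (hlam1 : IsGreatest {μ : ℝ | ML α (α - 1) μ = 0} lam1)
    (hML : ML α (α - 1) lam ≠ 0) :
    (∀ t ∈ Set.Ioo (0:ℝ) 1, ∀ s ∈ Set.Ioo (0:ℝ) 1, 0 < greenG α lam t s) ↔
      lam1 < lam := by
  constructor
  · intro h
    by_contra hle
    push Not at hle
    have hneg := MLGreen.lam1_neg hα1 hlam1
    have h1 : ML α (α-1) lam1 = 0 := hlam1.1
    have hne : lam ≠ lam1 := by rintro rfl; exact hML h1
    have hlt : lam < lam1 := lt_of_le_of_ne hle hne
    set r := (lam1 / lam) ^ (1/α) with hr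
    have hq0 : 0 < lam1 / lam := div_pos_of_neg_of_neg hneg (by linarith)
    have hq1 : lam1 / lam < 1 := by rw [div_lt_one_of_neg (by linarith)]; exact hlt
    have hr0 : 0 < r := Real.rpow_pos_of_pos hq0 _
    have hr1 : r < 1 := Real.rpow_lt_one hq0.le hq1 (by positivity)
    have hrα : r ^ α = lam1 / lam := by
      rw [hr, ← Real.rpow_mul hq0.le, one_div_mul_cancel (by linarith), Real.rpow_one]
    have hG := h ((1-r)/2) ⟨by linarith, by linarith⟩ (1-r) ⟨by linarith, by linarith⟩
    unfold greenG at hG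
    rw [if_neg (by linarith), show 1 - (1 - r) = r by ring, hrα,
      mul_div_cancel₀ _ (by linarith : lam ≠ 0), h1] at hG
    simp at hG
  · intro h t ht s hs
    exact MLGreen.green_pos hα1 hα2 hlam1 h ht hs
end

section
/- Let 1<α≤2, λ₁* the largest real zero of E_{α,α−1}(λ)=0, λ>λ₁*, and G the associated Green's function. Then there exist a constant M>0 and a continuous function m:I→ℝ with m(0)=0 and m(t)>0 for all t∈(0,1], such that m(t) ≤ t^{2−α} G(t,s)/(s (1−s)^{α−2}) ≤ M for all t,s∈(0,1). -/
theorem ML_summable {α : ℝ} (hα : 1 < α) (β x : ℝ) :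
    Summable (fun k : ℕ => x ^ k / Real.Gamma (α * k + β)) := by
  refine Summable.of_norm_bounded_eventually_nat (g := fun k : ℕ => |x| ^ k / (k.factorial : ℝ))
    (Real.summable_pow_div_factorial |x|) ?_
  obtain ⟨K, hK⟩ := exists_nat_gt ((1 - β) / (α - 1))
  filter_upwards [Filter.eventually_ge_atTop (max K 1)] with k hk
  have h1 : (K : ℝ) ≤ k := by exact_mod_cast (le_max_left _ _).trans hk
  have h2 : (1 : ℝ) ≤ k := by exact_mod_cast (le_max_right _ _).trans hk
  have h3 : (k : ℝ) + 1 ≤ α * k + β := by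
    have : (1 - β) / (α - 1) < k := hK.trans_le h1
    rw [div_lt_iff₀ (by linarith)] at this
    nlinarith
  have h4 : (k.factorial : ℝ) ≤ Real.Gamma (α * k + β) := by
    rw [← Real.Gamma_nat_eq_factorial]
    exact Real.Gamma_strictMonoOn_Ici.monotoneOn (by simp; linarith) (by simp; linarith) h3
  have h5 : (0 : ℝ) < k.factorial := by exact_mod_cast k.factorial_pos
  rw [norm_div, norm_pow, Real.norm_eq_abs, Real.norm_eq_abs, abs_of_pos (h5.trans_le h4)]
  gcongr

theorem ML_summable_abs {α : ℝ} (hα : 1 < α) (β x : ℝ) :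
    Summable (fun k : ℕ => |x| ^ k / |Real.Gamma (α * k + β)|) := by
  have := (ML_summable hα β x).norm
  simpa [abs_div, abs_pow] using this

theorem ML_lip {α : ℝ} (hα : 1 < α) (β R : ℝ) (hR : 0 ≤ R) :
    ∃ C : ℝ, 0 ≤ C ∧ ∀ x y : ℝ, |x| ≤ R → |y| ≤ R → |ML α β x - ML α β y| ≤ C * |x - y| := by
  have hs := ML_summable_abs hα β (2 * (R + 1))
  refine ⟨∑' k : ℕ, |2 * (R + 1)| ^ k / |Real.Gamma (α * k + β)|,
    tsum_nonneg fun k => by positivity, fun x y hx hy => ?_⟩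
  unfold ML
  rw [← (ML_summable hα β x).tsum_sub (ML_summable hα β y), ← tsum_mul_right, ← Real.norm_eq_abs]
  refine tsum_of_norm_bounded (hs.mul_right _).hasSum fun k => ?_
  rw [← sub_div, norm_div, Real.norm_eq_abs, Real.norm_eq_abs, div_mul_eq_mul_div]
  gcongr
  have h1 := abs_pow_sub_pow_le x y k
  have h2 : max |x| |y| ≤ R := max_le hx hy
  refine h1.trans ?_
  rw [mul_assoc, mul_comm]
  refine mul_le_mul_of_nonneg_right ?_ (abs_nonneg _)
  rw [abs_of_nonneg (by positivity : 0 ≤ 2 * (R + 1))]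
  rw [mul_pow]
  have h3 : (k : ℝ) ≤ 2 ^ k := by exact_mod_cast (Nat.lt_two_pow_self).le
  have h4 : max |x| |y| ^ (k - 1) ≤ (R + 1) ^ k := by
    calc max |x| |y| ^ (k - 1) ≤ (R + 1) ^ (k - 1) := by
          gcongr
          linarith
      _ ≤ (R + 1) ^ k := pow_le_pow_right₀ (by linarith) (by omega)
  gcongr

theorem ML_continuous {α : ℝ} (hα : 1 < α) (β : ℝ) : Continuous (ML α β) := by
  rw [continuous_iff_continuousAt]
  intro x
  obtain ⟨C, hC, h⟩ := ML_lip hα β (|x| + 1) (by positivity)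
  have hx : Set.Ioo (x - 1) (x + 1) ∈ nhds x := Ioo_mem_nhds (by linarith) (by linarith)
  have hl : LipschitzOnWith ⟨C, hC⟩ (ML α β) (Set.Ioo (x - 1) (x + 1)) := by
    refine LipschitzOnWith.of_dist_le_mul fun a ha b hb => ?_
    rw [Real.dist_eq, Real.dist_eq]
    have hh : ∀ a ∈ Set.Ioo (x - 1) (x + 1), |a| ≤ |x| + 1 := by
      intro a ha
      rw [abs_le]
      constructor <;> linarith [ha.1, ha.2, neg_abs_le x, le_abs_self x]
    exact h a b (hh a ha) (hh b hb)
  exact hl.continuousOn.continuousAt hx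

theorem ML_pos_of_nonneg {α β : ℝ} (hα : 1 < α) (hβ : 0 < β) {x : ℝ} (hx : 0 ≤ x) :
    0 < ML α β x := by
  unfold ML
  have hg : ∀ k : ℕ, 0 < Real.Gamma (α * k + β) := fun k => Real.Gamma_pos_of_pos (by positivity)
  refine (ML_summable hα β x).tsum_pos (fun k => ?_) 0 ?_
  · have := hg k
    positivity
  · have := hg 0
    simp only [pow_zero]
    positivity

theorem ML_zero {α β : ℝ} : ML α β 0 = 1 / Real.Gamma β := by
  unfold ML
  rw [tsum_eq_single 0]
  · simp
  · intro k hk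
    simp [hk]

theorem inv_Gamma_sub_one (z : ℝ) : 1 / Real.Gamma (z - 1) = (z - 1) / Real.Gamma z := by
  rcases eq_or_ne (z - 1) 0 with h | h
  · rw [h]; simp [Real.Gamma_zero]
  · have := Real.Gamma_add_one h
    rw [sub_add_cancel] at this
    rw [this]
    rcases eq_or_ne (Real.Gamma (z - 1)) 0 with h' | h'
    · rw [h']; simp
    · field_simp

/-- `F_β(t) = t^{β-1} E_{α,β}(λ t^α)`. -/
noncomputable def FF (α lam β t : ℝ) : ℝ := t ^ (β - 1) * ML α β (lam * t ^ α)

theorem FF_eq {α lam β t : ℝ} (ht : 0 < t) :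
    FF α lam β t = ∑' k : ℕ, lam ^ k * t ^ (α * k + β - 1) / Real.Gamma (α * k + β) := by
  unfold FF ML
  rw [← tsum_mul_left]
  congr 1
  ext k
  rw [mul_pow, ← Real.rpow_natCast (t ^ α), ← Real.rpow_mul ht.le,
    show α * k + β - 1 = (β - 1) + α * k by ring, Real.rpow_add ht]
  ring

theorem FF_summable {α lam β t : ℝ} (hα : 1 < α) (ht : 0 < t) :
    Summable fun k : ℕ => lam ^ k * t ^ (α * k + β - 1) / Real.Gamma (α * k + β) := by
  have := (ML_summable hα β (lam * t ^ α)).mul_left (t ^ (β - 1))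
  refine this.congr fun k => ?_
  rw [mul_pow, ← Real.rpow_natCast (t ^ α), ← Real.rpow_mul ht.le,
    show α * k + β - 1 = (β - 1) + α * k by ring, Real.rpow_add ht]
  ring

theorem FF_hasDerivAt {α lam : ℝ} (hα : 1 < α) (β : ℝ) {t : ℝ} (ht : 0 < t) :
    HasDerivAt (FF α lam β) (FF α lam (β - 1) t) t := by
  have key : HasDerivAt
      (fun z => ∑' k : ℕ, lam ^ k * z ^ (α * k + β - 1) / Real.Gamma (α * k + β))
      (∑' k : ℕ, lam ^ k * t ^ (α * k + (β - 1) - 1) / Real.Gamma (α * k + (β - 1))) t := by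
    have hsum := ((ML_summable_abs hα (β - 1) (lam * (2 * t) ^ α)).mul_left
      ((t / 2) ^ (β - 2) + (2 * t) ^ (β - 2)))
    refine hasDerivAt_tsum_of_isPreconnected (t := Set.Ioo (t / 2) (2 * t))
      (g := fun (k : ℕ) z => lam ^ k * z ^ (α * k + β - 1) / Real.Gamma (α * k + β))
      (g' := fun (k : ℕ) z =>
        lam ^ k * z ^ (α * k + (β - 1) - 1) / Real.Gamma (α * k + (β - 1)))
      (y := t) (y₀ := t) hsum isOpen_Ioo isPreconnected_Ioo ?_ ?_ ⟨by linarith, by linarith⟩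
      (FF_summable hα ht) ⟨by linarith, by linarith⟩
    · intro k y hy
      have hy0 : 0 < y := by linarith [hy.1]
      have h := ((Real.hasDerivAt_rpow_const (x := y) (p := α * k + β - 1)
        (Or.inl hy0.ne')).const_mul (lam ^ k)).div_const (Real.Gamma (α * k + β))
      refine h.congr_deriv ?_
      symm
      have := inv_Gamma_sub_one (α * k + β)
      rw [show α * k + (β - 1) = α * k + β - 1 by ring, div_eq_mul_one_div, this]
      ring
    · intro k y hy
      have hy0 : 0 < y := by linarith [hy.1]
      rw [norm_div, norm_mul, norm_pow, Real.norm_eq_abs, Real.norm_eq_abs, Real.norm_eq_abs]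
      rw [abs_mul, mul_pow, ← mul_div_assoc]
      refine div_le_div_of_nonneg_right ?_ (abs_nonneg _)
      rw [abs_of_pos (Real.rpow_pos_of_pos hy0 _),
        abs_of_pos (Real.rpow_pos_of_pos (by linarith : 0 < 2 * t) _),
        ← Real.rpow_natCast ((2 * t) ^ α), ← Real.rpow_mul (by linarith),
        show α * k + (β - 1) - 1 = (β - 2) + α * k by ring, Real.rpow_add hy0]
      have h1 : y ^ (α * k) ≤ (2 * t) ^ (α * k) :=
        Real.rpow_le_rpow hy0.le hy.2.le (by positivity)
      have h2 : y ^ (β - 2) ≤ (t / 2) ^ (β - 2) + (2 * t) ^ (β - 2) := by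
        rcases le_total 0 (β - 2) with h | h
        · have := Real.rpow_le_rpow hy0.le hy.2.le h
          have h' := Real.rpow_pos_of_pos (by linarith : 0 < t / 2) (β - 2)
          linarith
        · have := Real.rpow_le_rpow_of_nonpos (by linarith : 0 < t / 2) hy.1.le h
          have h' := Real.rpow_pos_of_pos (by linarith : 0 < 2 * t) (β - 2)
          linarith
      calc |lam| ^ k * (y ^ (β - 2) * y ^ (α * k))
          ≤ |lam| ^ k * (((t / 2) ^ (β - 2) + (2 * t) ^ (β - 2)) * (2 * t) ^ (α * k)) := by
            gcongr
        _ = _ := by ring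
  rw [FF_eq ht]
  refine key.congr_of_eventuallyEq ?_
  filter_upwards [lt_mem_nhds ht] with z hz
  exact FF_eq hz

theorem FF_shift {α lam : ℝ} (hα : 1 < α) (β : ℝ) {t : ℝ} (ht : 0 < t) :
    FF α lam β t = t ^ (β - 1) / Real.Gamma β + lam * FF α lam (β + α) t := by
  rw [FF_eq ht, FF_eq ht, (FF_summable hα ht).tsum_eq_zero_add, ← tsum_mul_left]
  congr 1
  · simp
  · congr 1
    ext k
    push_cast
    rw [show α * ((k : ℝ) + 1) + β = α * k + (β + α) by ring, pow_succ]
    ring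

open MeasureTheory in
theorem beta_integral {β γ t : ℝ} (hβ : 0 < β) (hγ : 0 < γ) (ht : 0 < t) :
    ∫ u in Set.Ioo 0 t, (t - u) ^ (γ - 1) * u ^ (β - 1) =
      t ^ (β + γ - 1) * (Real.Gamma β * Real.Gamma γ / Real.Gamma (β + γ)) := by
  have h := Complex.betaIntegral_scaled (β : ℂ) (γ : ℂ) ht
  rw [Complex.betaIntegral_eq_Gamma_mul_div _ _ (by simpa using hβ) (by simpa using hγ)] at h
  have h2 : ∫ u in Set.Ioo 0 t, ((u : ℂ) ^ ((β : ℂ) - 1) * ((t : ℂ) - u) ^ ((γ : ℂ) - 1)) =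
      ((∫ u in Set.Ioo 0 t, (t - u) ^ (γ - 1) * u ^ (β - 1) : ℝ) : ℂ) := by
    rw [← integral_complex_ofReal]
    refine setIntegral_congr_fun measurableSet_Ioo fun u hu => ?_
    have h1 : 0 ≤ u := hu.1.le
    have h3 : 0 ≤ t - u := by linarith [hu.2]
    push_cast [Complex.ofReal_cpow h1, Complex.ofReal_cpow h3]
    ring
  rw [intervalIntegral.integral_of_le ht.le, integral_Ioc_eq_integral_Ioo, h2] at h
  have h4 : ((t : ℂ) ^ ((β : ℂ) + γ - 1) *
      (Complex.Gamma β * Complex.Gamma γ / Complex.Gamma (β + γ))) =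
      ((t ^ (β + γ - 1) * (Real.Gamma β * Real.Gamma γ / Real.Gamma (β + γ)) : ℝ) : ℂ) := by
    push_cast [Complex.ofReal_cpow ht.le, ← Complex.Gamma_ofReal]
    rfl
  rw [h4] at h
  exact_mod_cast h

open MeasureTheory in
theorem beta_integrable {β γ t : ℝ} (hβ : 0 < β) (hγ : 0 < γ) (ht : 0 < t) :
    IntegrableOn (fun u => (t - u) ^ (γ - 1) * u ^ (β - 1)) (Set.Ioo 0 t) := by
  by_contra hcon
  have h := beta_integral hβ hγ ht
  rw [integral_undef hcon] at h
  have h1 := Real.Gamma_pos_of_pos hβ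
  have h2 := Real.Gamma_pos_of_pos hγ
  have h3 := Real.Gamma_pos_of_pos (add_pos hβ hγ)
  have h4 := Real.rpow_pos_of_pos ht (β + γ - 1)
  have : 0 < t ^ (β + γ - 1) * (Real.Gamma β * Real.Gamma γ / Real.Gamma (β + γ)) := by positivity
  linarith

open MeasureTheory in
theorem FF_conv {α lam : ℝ} (hα : 1 < α) {β γ t : ℝ} (hβ : 0 < β) (hγ : 0 < γ) (ht : 0 < t) :
    ∫ u in Set.Ioo 0 t, (t - u) ^ (γ - 1) / Real.Gamma γ * FF α lam β u =
      FF α lam (β + γ) t := by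
  have hΓγ := Real.Gamma_pos_of_pos hγ
  have hb : ∀ k : ℕ, 0 < α * k + β := fun k => by positivity
  have hintegr : ∀ k : ℕ, IntegrableOn
      (fun u => (lam ^ k / (Real.Gamma γ * Real.Gamma (α * k + β))) *
        ((t - u) ^ (γ - 1) * u ^ (α * k + β - 1))) (Set.Ioo 0 t) := fun k =>
    (beta_integrable (hb k) hγ ht).const_mul _
  have hval : ∀ k : ℕ, ∀ c : ℝ, ∫ u in Set.Ioo 0 t,
      (c / (Real.Gamma γ * Real.Gamma (α * k + β))) *
        ((t - u) ^ (γ - 1) * u ^ (α * k + β - 1)) =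
        c * t ^ (α * k + (β + γ) - 1) / Real.Gamma (α * k + (β + γ)) := by
    intro k c
    have := Real.Gamma_pos_of_pos (hb k)
    rw [integral_const_mul, beta_integral (hb k) hγ ht, ← add_assoc]
    field_simp
  have hnorm : ∀ k : ℕ, ∫ u in Set.Ioo 0 t, ‖(lam ^ k / (Real.Gamma γ * Real.Gamma (α * k + β))) *
        ((t - u) ^ (γ - 1) * u ^ (α * k + β - 1))‖ =
        |lam| ^ k * t ^ (α * k + (β + γ) - 1) / Real.Gamma (α * k + (β + γ)) := by
    intro k
    rw [← hval]
    refine setIntegral_congr_fun measurableSet_Ioo fun u hu => ?_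
    have h1 : 0 ≤ u := hu.1.le
    have h3 : 0 ≤ t - u := by linarith [hu.2]
    have h4 := Real.rpow_nonneg h1 (α * k + β - 1)
    have h5 := Real.rpow_nonneg h3 (γ - 1)
    have := Real.Gamma_pos_of_pos (hb k)
    simp only [norm_mul, norm_div, norm_pow, Real.norm_eq_abs, abs_of_nonneg h4, abs_of_nonneg h5,
      abs_of_pos this, abs_of_pos hΓγ]
  have hmain := hasSum_integral_of_summable_integral_norm hintegr (by
    simp_rw [hnorm]
    exact FF_summable hα ht)
  simp_rw [hval] at hmain
  rw [FF_eq ht, hmain.tsum_eq]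
  refine setIntegral_congr_fun measurableSet_Ioo fun u hu => ?_
  rw [FF_eq hu.1, ← tsum_mul_left]
  congr 1
  ext k
  ring

open MeasureTheory in
theorem FF_conv_integrable {α lam : ℝ} (hα : 1 < α) {β γ t : ℝ} (hβ : 0 < β) (hγ : 0 < γ)
    (ht : 0 < t) :
    IntegrableOn (fun u => (t - u) ^ (γ - 1) / Real.Gamma γ * FF α lam β u) (Set.Ioo 0 t) := by
  have hc : Continuous fun u : ℝ => ML α β (lam * u ^ α) :=
    (ML_continuous hα β).comp (continuous_const.mul
      (continuous_id.rpow_const fun x => Or.inr (by linarith)))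
  obtain ⟨C, hC⟩ := (isCompact_Icc (a := (0:ℝ)) (b := t)).exists_bound_of_continuousOn hc.continuousOn
  have h := (beta_integrable hβ hγ ht).mul_bdd (c := C)
    (g := fun u : ℝ => ML α β (lam * u ^ α)) hc.aestronglyMeasurable (by
      refine (ae_restrict_iff' measurableSet_Ioo).2 (Filter.Eventually.of_forall fun u hu => ?_)
      exact hC u ⟨hu.1.le, hu.2.le⟩)
  refine (h.const_mul (1 / Real.Gamma γ)).congr (Filter.Eventually.of_forall fun u => ?_)
  simp only [FF]
  ring

theorem second_diff {y h r T : ℝ} (hr : 0 < r) (hh : 0 < h) (hy : h < y) (hT : y ≤ T) :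
    r * T ^ (-r - 2) * h ^ 2 ≤ (y + h) ^ (-r) - 2 * y ^ (-r) + (y - h) ^ (-r) := by
  have hy0 : 0 < y := hh.trans hy
  have ha : 0 < y + h := by linarith
  have hb : 0 < y - h := by linarith
  set z : ℝ := (y + h) * (y - h) / y ^ 2 with hz
  have hzpos : 0 < z := by positivity
  have hz1 : 1 - z = h ^ 2 / y ^ 2 := by rw [hz]; field_simp; ring
  have h1 : 1 + r / 2 * (h ^ 2 / y ^ 2) ≤ z ^ (-(r / 2)) := by
    rw [Real.rpow_def_of_pos hzpos, ← hz1]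
    have e1 := Real.add_one_le_exp (Real.log z * -(r / 2))
    have e2 := Real.log_le_sub_one_of_pos hzpos
    nlinarith
  have h2 : y ^ (-r) * z ^ (-(r / 2)) = (y + h) ^ (-(r / 2)) * (y - h) ^ (-(r / 2)) := by
    rw [hz, Real.div_rpow (by positivity) (by positivity), Real.mul_rpow ha.le hb.le,
      ← Real.rpow_natCast y 2, ← Real.rpow_mul hy0.le]
    have : y ^ (((2 : ℕ) : ℝ) * -(r / 2)) = y ^ (-r) := by congr 1; push_cast; ring
    rw [this]
    have := Real.rpow_pos_of_pos hy0 (-r)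
    field_simp
  have h3 : (y + h) ^ (-r) = ((y + h) ^ (-(r / 2))) ^ 2 := by
    rw [← Real.rpow_natCast, ← Real.rpow_mul ha.le]; congr 1; push_cast; ring
  have h4 : (y - h) ^ (-r) = ((y - h) ^ (-(r / 2))) ^ 2 := by
    rw [← Real.rpow_natCast, ← Real.rpow_mul hb.le]; congr 1; push_cast; ring
  have h5 : T ^ (-r - 2) ≤ y ^ (-r - 2) :=
    Real.rpow_le_rpow_of_nonpos hy0 hT (by linarith)
  have h6 : y ^ (-r - 2) = y ^ (-r) / y ^ 2 := by
    rw [Real.rpow_sub hy0]; norm_num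
  have h7 : y ^ (-r) * (1 + r / 2 * (h ^ 2 / y ^ 2)) ≤ y ^ (-r) * z ^ (-(r / 2)) :=
    mul_le_mul_of_nonneg_left h1 (Real.rpow_nonneg hy0.le _)
  have h8 : y ^ (-r) * (1 + r / 2 * (h ^ 2 / y ^ 2)) = y ^ (-r) + r * y ^ (-r - 2) * h ^ 2 / 2 := by
    rw [h6]; field_simp
  have h9 : r * T ^ (-r - 2) * h ^ 2 ≤ r * y ^ (-r - 2) * h ^ 2 := by gcongr
  rw [h3, h4]
  nlinarith [sq_nonneg ((y + h) ^ (-(r / 2)) - (y - h) ^ (-(r / 2)))]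

/-- truncated kernel -/
noncomputable def kp (α lam g x : ℝ) : ℝ := if 0 < x then x ^ (1 - α) / g - lam * x else 0

theorem kp_bound {α lam g T C h u fu : ℝ} (hα1 : 1 < α) (hg : 0 < g)
    (hC : 0 ≤ C) (hh : 0 < h) (hh4 : 2 * h < T / 2) (hu0 : 0 < u) (huT : u < T)
    (hf0 : 0 < fu) (hfC : T / 2 < u → fu ≤ C * (T - u) ^ 2) :
    (α - 1) * T ^ (-α - 1) / g * h ^ 2 * (if u < T / 2 then fu else 0)
      - 8 * C * h ^ 2 / g * (if T - 2 * h ≤ u ∧ u < T - h then (T - h - u) ^ (1 - α) else 0)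
      - 4 * C * |lam| * h ^ 3 * (if T - 2 * h ≤ u then 1 else 0) ≤
    (kp α lam g (T - u) - 2 * kp α lam g (T - h - u) + kp α lam g (T - 2 * h - u)) * fu := by
  have hT : 0 < T := by linarith
  have hlam := neg_abs_le lam
  have hlam' := le_abs_self lam
  rcases lt_or_ge u (T - 2 * h) with h1 | h1
  · rw [if_neg (show ¬ (T - 2 * h ≤ u ∧ u < T - h) by rintro ⟨h2, -⟩; linarith),
      if_neg (show ¬ (T - 2 * h ≤ u) by linarith)]
    have e := second_diff (r := α - 1) (y := T - h - u) (h := h) (T := T) (by linarith) hh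
      (by linarith) (by linarith)
    rw [show T - h - u + h = T - u by ring, show T - h - u - h = T - 2 * h - u by ring,
      show -(α - 1) - 2 = -α - 1 by ring, show -(α - 1) = 1 - α by ring] at e
    have e2 : kp α lam g (T - u) - 2 * kp α lam g (T - h - u) + kp α lam g (T - 2 * h - u) =
        ((T - u) ^ (1 - α) - 2 * (T - h - u) ^ (1 - α) + (T - 2 * h - u) ^ (1 - α)) / g := by
      unfold kp
      rw [if_pos (by linarith), if_pos (by linarith), if_pos (by linarith)]
      ring
    have e3 : (α - 1) * T ^ (-α - 1) / g * h ^ 2 ≤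
        kp α lam g (T - u) - 2 * kp α lam g (T - h - u) + kp α lam g (T - 2 * h - u) := by
      rw [e2, div_mul_eq_mul_div]
      gcongr
    have e4 : 0 ≤ (α - 1) * T ^ (-α - 1) / g * h ^ 2 := by
      have := Real.rpow_pos_of_pos hT (-α - 1)
      have : 0 < α - 1 := by linarith
      positivity
    have e5 := mul_le_mul_of_nonneg_right e3 hf0.le
    split_ifs
    · linarith
    · nlinarith
  · have hf := hfC (by linarith)
    have hx2 : (T - u) ^ 2 ≤ 4 * h ^ 2 := by nlinarith
    have hf' : fu ≤ 4 * C * h ^ 2 := by nlinarith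
    rw [if_neg (by linarith), if_pos h1]
    rcases lt_or_ge u (T - h) with h2 | h2
    · rw [if_pos ⟨h1, h2⟩]
      unfold kp
      rw [if_pos (by linarith), if_pos (by linarith), if_neg (by linarith)]
      have p1 := Real.rpow_nonneg (by linarith : 0 ≤ T - u) (1 - α)
      have p2 := Real.rpow_nonneg (by linarith : 0 ≤ T - h - u) (1 - α)
      set A := (T - u) ^ (1 - α)
      set B := (T - h - u) ^ (1 - α)
      have q1 : lam * (2 * h - (T - u)) ≤ |lam| * h := by
        have : 0 ≤ 2 * h - (T - u) := by linarith
        calc lam * (2 * h - (T - u)) ≤ |lam| * (2 * h - (T - u)) := by gcongr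
          _ ≤ |lam| * h := by gcongr; linarith
      have q2 : -(2 * (B / g) + |lam| * h) ≤
          A / g - lam * (T - u) - 2 * (B / g - lam * (T - h - u)) + 0 := by
        have : 0 ≤ A / g := by positivity
        linarith
      have q3 := mul_le_mul_of_nonneg_right q2 hf0.le
      have q4 : (2 * (B / g) + |lam| * h) * fu ≤ (2 * (B / g) + |lam| * h) * (4 * C * h ^ 2) := by
        gcongr
      have q5 : (2 * (B / g) + |lam| * h) * (4 * C * h ^ 2) =
        8 * C * h ^ 2 / g * B + 4 * C * |lam| * h ^ 3 := by ring
      linarith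
    · rw [if_neg (by rintro ⟨-, h3⟩; linarith)]
      unfold kp
      rw [if_pos (by linarith), if_neg (by linarith), if_neg (by linarith)]
      have p1 := Real.rpow_nonneg (by linarith : 0 ≤ T - u) (1 - α)
      set A := (T - u) ^ (1 - α)
      have q1 : lam * (T - u) ≤ |lam| * h := by
        have : 0 ≤ T - u := by linarith
        calc lam * (T - u) ≤ |lam| * (T - u) := by gcongr
          _ ≤ |lam| * h := by gcongr; linarith
      have q2 : -(|lam| * h) ≤ A / g - lam * (T - u) - 2 * 0 + 0 := by
        have : 0 ≤ A / g := by positivity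
        linarith
      have q3 := mul_le_mul_of_nonneg_right q2 hf0.le
      have q4 : (|lam| * h) * fu ≤ (|lam| * h) * (4 * C * h ^ 2) := by
        gcongr
      have q5 : (|lam| * h) * (4 * C * h ^ 2) = 4 * C * |lam| * h ^ 3 := by ring
      linarith

open MeasureTheory in
theorem key_contra {α lam g T C q : ℝ} {f : ℝ → ℝ} (hα1 : 1 < α) (hα2 : α < 2) (hg : 0 < g)
    (hT : 0 < T) (hC : 0 ≤ C)
    (hf0 : ∀ u ∈ Set.Ioo 0 T, 0 < f u)
    (hfC : ∀ u ∈ Set.Ioo (T / 2) T, f u ≤ C * (T - u) ^ 2)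
    (hfi : IntegrableOn f (Set.Ioo 0 T))
    (hi : ∀ t, 0 < t → t ≤ T →
      IntegrableOn (fun u => ((t - u) ^ (1 - α) / g - lam * (t - u)) * f u) (Set.Ioo 0 t))
    (hv : ∀ t, 0 < t → t ≤ T →
      ∫ u in Set.Ioo 0 t, ((t - u) ^ (1 - α) / g - lam * (t - u)) * f u = 1 - q * t) : False := by
  -- kernels on the whole interval
  have hset : ∀ t, t ≤ T → Set.Ioo 0 T ∩ Set.Iio t = Set.Ioo 0 t := by
    intro t ht
    ext u
    simp only [Set.mem_inter_iff, Set.mem_Ioo, Set.mem_Iio]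
    constructor
    · rintro ⟨⟨a, b⟩, c⟩; exact ⟨a, c⟩
    · rintro ⟨a, b⟩; exact ⟨⟨a, by linarith⟩, b⟩
  have hfun : ∀ t, (fun u => kp α lam g (t - u) * f u) =
      (Set.Iio t).indicator (fun u => ((t - u) ^ (1 - α) / g - lam * (t - u)) * f u) := by
    intro t
    ext u
    unfold kp
    by_cases h : u < t
    · rw [Set.indicator_of_mem (show u ∈ Set.Iio t from h), if_pos (by linarith)]
    · rw [Set.indicator_of_notMem (show u ∉ Set.Iio t from h), if_neg (by linarith), zero_mul]
  have hki : ∀ t, 0 < t → t ≤ T →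
      IntegrableOn (fun u => kp α lam g (t - u) * f u) (Set.Ioo 0 T) := by
    intro t h0 h1
    rw [hfun, IntegrableOn, integrable_indicator_iff measurableSet_Iio, IntegrableOn,
      Measure.restrict_restrict measurableSet_Iio, Set.inter_comm, hset t h1]
    exact hi t h0 h1
  have hkv : ∀ t, 0 < t → t ≤ T → ∫ u in Set.Ioo 0 T, kp α lam g (t - u) * f u = 1 - q * t := by
    intro t h0 h1
    rw [hfun, setIntegral_indicator measurableSet_Iio, hset t h1]
    exact hv t h0 h1
  set δ := ∫ u in Set.Ioo 0 (T / 2), f u with hδ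
  have hδ0 : 0 < δ := by
    rw [hδ]
    have hsub : Set.Ioo 0 (T / 2) ⊆ Set.Ioo 0 T := Set.Ioo_subset_Ioo_right (by linarith)
    rw [setIntegral_pos_iff_support_of_nonneg_ae]
    · have : Function.support f ∩ Set.Ioo 0 (T / 2) = Set.Ioo 0 (T / 2) := by
        refine Set.inter_eq_right.2 fun u hu => (hf0 u (hsub hu)).ne'
      rw [this, Real.volume_Ioo]
      simpa using hT
    · refine (ae_restrict_iff' measurableSet_Ioo).2 (Filter.Eventually.of_forall fun u hu => ?_)
      exact (hf0 u (hsub hu)).le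
    · exact hfi.mono_set hsub
  set c := (α - 1) * T ^ (-α - 1) / g with hc
  have hc0 : 0 < c := by
    have := Real.rpow_pos_of_pos hT (-α - 1)
    have : 0 < α - 1 := by linarith
    positivity
  -- choose h
  obtain ⟨h, hh0, hh4, hsmall⟩ : ∃ h : ℝ, 0 < h ∧ 2 * h < T / 2 ∧
      8 * C / g * (h ^ (2 - α) / (2 - α)) + 8 * C * |lam| * h ^ 2 < c * δ := by
    have hcont : Filter.Tendsto
        (fun h : ℝ => 8 * C / g * (h ^ (2 - α) / (2 - α)) + 8 * C * |lam| * h ^ 2)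
        (nhdsWithin 0 (Set.Ioi 0)) (nhds 0) := by
      have : Continuous
          (fun h : ℝ => 8 * C / g * (h ^ (2 - α) / (2 - α)) + 8 * C * |lam| * h ^ 2) := by
        have h1 : Continuous fun h : ℝ => h ^ (2 - α) :=
          continuous_id.rpow_const fun x => Or.inr (by linarith)
        fun_prop
      have h2 := this.tendsto 0
      simp only [Real.zero_rpow (by linarith : 2 - α ≠ 0)] at h2
      norm_num at h2
      exact h2.mono_left nhdsWithin_le_nhds
    have e1 := hcont.eventually (gt_mem_nhds (mul_pos hc0 hδ0))
    have e2 : ∀ᶠ h : ℝ in nhdsWithin 0 (Set.Ioi 0), h < T / 4 :=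
      nhdsWithin_le_nhds (gt_mem_nhds (by linarith))
    obtain ⟨h, ⟨h1, h2⟩, h3⟩ := ((e1.and e2).and self_mem_nhdsWithin).exists
    exact ⟨h, h3, by linarith, h1⟩
  -- the zero identity
  have hzero : ∫ u in Set.Ioo 0 T,
      (kp α lam g (T - u) - 2 * kp α lam g (T - h - u) + kp α lam g (T - 2 * h - u)) * f u = 0 := by
    have i1 := hki T hT le_rfl
    have i2 := hki (T - h) (by linarith) (by linarith)
    have i3 := hki (T - 2 * h) (by linarith) (by linarith)
    have : ∀ u, (kp α lam g (T - u) - 2 * kp α lam g (T - h - u) + kp α lam g (T - 2 * h - u)) * f u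
      = kp α lam g (T - u) * f u - 2 * (kp α lam g (T - h - u) * f u)
        + kp α lam g (T - 2 * h - u) * f u := fun u => by ring
    simp_rw [this]
    have e1 := integral_add (i1.sub (i2.const_mul 2)) i3
    simp only [Pi.sub_apply] at e1
    rw [e1, integral_sub i1 (i2.const_mul 2),
      integral_const_mul, hkv T hT le_rfl, hkv (T - h) (by linarith) (by linarith),
      hkv (T - 2 * h) (by linarith) (by linarith)]
    ring
  have hintegr : IntegrableOn (fun u =>
      (kp α lam g (T - u) - 2 * kp α lam g (T - h - u) + kp α lam g (T - 2 * h - u)) * f u)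
      (Set.Ioo 0 T) := by
    have i1 := hki T hT le_rfl
    have i2 := hki (T - h) (by linarith) (by linarith)
    have i3 := hki (T - 2 * h) (by linarith) (by linarith)
    refine ((i1.sub (i2.const_mul 2)).add i3).congr (Filter.Eventually.of_forall fun u => ?_)
    simp only [Pi.sub_apply, Pi.add_apply]
    ring
  -- integrals of lower bound
  have f1 : (fun u => if u < T / 2 then f u else 0) = (Set.Iio (T / 2)).indicator f := by
    ext u; simp [Set.indicator_apply]
  have f2 : (fun u => if T - 2 * h ≤ u ∧ u < T - h then (T - h - u) ^ (1 - α) else 0) =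
      (Set.Ico (T - 2 * h) (T - h)).indicator (fun u => (T - h - u) ^ (1 - α)) := by
    ext u; simp [Set.indicator_apply]
  have f3 : (fun u : ℝ => if T - 2 * h ≤ u then (1 : ℝ) else 0) =
      (Set.Ici (T - 2 * h)).indicator (fun _ => (1 : ℝ)) := by
    ext u; simp [Set.indicator_apply]
  have hpow : IntegrableOn (fun u : ℝ => (T - h - u) ^ (1 - α)) (Set.Ico (T - 2 * h) (T - h)) := by
    have := (intervalIntegral.intervalIntegrable_rpow' (a := 0) (b := h)
      (by linarith : -1 < 1 - α)).comp_sub_left (T - h)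
    rw [sub_zero, show T - h - h = T - 2 * h by ring] at this
    have := this.symm
    rw [intervalIntegrable_iff_integrableOn_Ico_of_le (by linarith)] at this
    exact this
  have hpowv : ∫ u in Set.Ico (T - 2 * h) (T - h), (T - h - u) ^ (1 - α) =
      h ^ (2 - α) / (2 - α) := by
    rw [integral_Ico_eq_integral_Ioo, ← integral_Ioc_eq_integral_Ioo,
      ← intervalIntegral.integral_of_le (by linarith),
      intervalIntegral.integral_comp_sub_left (fun x => x ^ (1 - α)) (T - h), sub_self,
      show T - h - (T - 2 * h) = h by ring, integral_rpow (Or.inl (by linarith)),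
      show 1 - α + 1 = 2 - α by ring, Real.zero_rpow (by linarith), sub_zero]
  have g1 : IntegrableOn (fun u => if u < T / 2 then f u else 0) (Set.Ioo 0 T) := by
    rw [f1]; exact hfi.indicator measurableSet_Iio
  have g2 : IntegrableOn
      (fun u => if T - 2 * h ≤ u ∧ u < T - h then (T - h - u) ^ (1 - α) else 0) (Set.Ioo 0 T) := by
    rw [f2]
    exact (hpow.integrable_indicator measurableSet_Ico).integrableOn
  have g3 : IntegrableOn (fun u : ℝ => if T - 2 * h ≤ u then (1 : ℝ) else 0) (Set.Ioo 0 T) := by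
    rw [f3]
    have : IntegrableOn (fun _ : ℝ => (1 : ℝ)) (Set.Ioo 0 T) := by
      simp
    exact this.indicator measurableSet_Ici
  have v1 : ∫ u in Set.Ioo 0 T, (if u < T / 2 then f u else 0) = δ := by
    rw [f1, setIntegral_indicator measurableSet_Iio, hset _ (by linarith)]
  have v2 : ∫ u in Set.Ioo 0 T,
      (if T - 2 * h ≤ u ∧ u < T - h then (T - h - u) ^ (1 - α) else 0) =
      h ^ (2 - α) / (2 - α) := by
    rw [f2, setIntegral_indicator measurableSet_Ico, ← hpowv]
    congr 2
    refine Set.inter_eq_right.2 fun u hu => ⟨by linarith [hu.1], by linarith [hu.2]⟩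
  have v3 : ∫ u in Set.Ioo 0 T, (if T - 2 * h ≤ u then (1 : ℝ) else 0) = 2 * h := by
    rw [f3, setIntegral_indicator measurableSet_Ici]
    have : Set.Ioo 0 T ∩ Set.Ici (T - 2 * h) = Set.Ico (T - 2 * h) T := by
      ext u
      simp only [Set.mem_inter_iff, Set.mem_Ioo, Set.mem_Ici, Set.mem_Ico]
      constructor
      · rintro ⟨⟨a, b⟩, c⟩; exact ⟨c, b⟩
      · rintro ⟨a, b⟩; exact ⟨⟨by linarith, b⟩, a⟩
    rw [this]
    simp [hh0.le]
  have hmono := setIntegral_mono_on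
    (((g1.const_mul (c * h ^ 2)).sub (g2.const_mul (8 * C * h ^ 2 / g))).sub
      (g3.const_mul (4 * C * |lam| * h ^ 3))) hintegr measurableSet_Ioo (fun u hu => by
      simp only [Pi.sub_apply]
      exact kp_bound hα1 hg hC hh0 hh4 hu.1 hu.2 (hf0 u hu) (fun h' => hfC u ⟨h', hu.2⟩))
  have hL := integral_sub ((g1.const_mul (c * h ^ 2)).sub (g2.const_mul (8 * C * h ^ 2 / g)))
      (g3.const_mul (4 * C * |lam| * h ^ 3))
  have hL2 := integral_sub (g1.const_mul (c * h ^ 2)) (g2.const_mul (8 * C * h ^ 2 / g))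
  simp only [Pi.sub_apply] at hmono hL
  rw [hzero, hL, hL2, integral_const_mul, integral_const_mul, integral_const_mul, v1, v2, v3] at hmono
  have hfin : c * h ^ 2 * δ - 8 * C * h ^ 2 / g * (h ^ (2 - α) / (2 - α)) -
      4 * C * |lam| * h ^ 3 * (2 * h) = h ^ 2 *
      (c * δ - (8 * C / g * (h ^ (2 - α) / (2 - α)) + 8 * C * |lam| * h ^ 2)) := by ring
  rw [hfin] at hmono
  have : 0 < h ^ 2 *
      (c * δ - (8 * C / g * (h ^ (2 - α) / (2 - α)) + 8 * C * |lam| * h ^ 2)) :=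
    mul_pos (by positivity) (by linarith)
  linarith

theorem FF_continuousOn {α lam : ℝ} (hα : 1 < α) (β : ℝ) :
    ContinuousOn (FF α lam β) (Set.Ioi 0) := fun _ ht =>
  (FF_hasDerivAt hα β ht).continuousAt.continuousWithinAt

open MeasureTheory in
theorem FF_integrable {α lam : ℝ} (hα : 1 < α) {β t : ℝ} (hβ : 0 < β) (ht : 0 < t) :
    IntegrableOn (FF α lam β) (Set.Ioo 0 t) := by
  have := FF_conv_integrable (lam := lam) hα hβ one_pos ht
  simpa using this

open MeasureTheory in
theorem logconc_ne {α lam T : ℝ} (hα1 : 1 < α) (hα2 : α < 2) (hT : 0 < T)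
    (hpos : ∀ t ∈ Set.Ioc 0 T, 0 < FF α lam α t)
    (hneg : ∀ t ∈ Set.Ioo 0 T,
      FF α lam (α - 2) t * FF α lam α t < FF α lam (α - 1) t ^ 2) :
    FF α lam (α - 2) T * FF α lam α T ≠ FF α lam (α - 1) T ^ 2 := by
  intro heq
  have hd : ∀ β t, 0 < t → HasDerivAt (FF α lam β) (FF α lam (β - 1) t) t :=
    fun β t ht => FF_hasDerivAt hα1 β ht
  have d1 : α - 1 - 1 = α - 2 := by ring
  have hTpos := hpos T ⟨hT, le_rfl⟩
  set q := FF α lam (α - 1) T / FF α lam α T with hq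
  have hanti : StrictAntiOn (fun t => FF α lam (α - 1) t / FF α lam α t) (Set.Ioc 0 T) := by
    refine strictAntiOn_of_deriv_neg (convex_Ioc 0 T) ?_ ?_
    · refine ContinuousOn.div ((FF_continuousOn hα1 _).mono fun t ht => ht.1)
        ((FF_continuousOn hα1 _).mono fun t ht => ht.1) fun t ht => (hpos t ht).ne'
    · intro t ht
      rw [interior_Ioc] at ht
      have hp := hpos t ⟨ht.1, ht.2.le⟩
      have := (hd (α - 1) t ht.1).div (hd α t ht.1) hp.ne'
      have e := this.deriv
      rw [d1] at e
      have e' : deriv (fun t => FF α lam (α - 1) t / FF α lam α t) t = _ := e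
      rw [e']
      refine div_neg_of_neg_of_pos ?_ (by positivity)
      have := hneg t ht
      nlinarith
  set f : ℝ → ℝ := fun u => FF α lam (α - 1) u - q * FF α lam α u with hf
  set f1 : ℝ → ℝ := fun u => FF α lam (α - 2) u - q * FF α lam (α - 1) u with hf1
  set f2 : ℝ → ℝ := fun u => FF α lam (α - 2 - 1) u - q * FF α lam (α - 2) u with hf2
  have hdf : ∀ u, 0 < u → HasDerivAt f (f1 u) u := by
    intro u hu
    have := (hd (α - 1) u hu).sub ((hd α u hu).const_mul q)
    rw [d1] at this
    exact this
  have hdf1 : ∀ u, 0 < u → HasDerivAt f1 (f2 u) u := by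
    intro u hu
    have := (hd (α - 2) u hu).sub ((hd (α - 1) u hu).const_mul q)
    rw [d1] at this
    exact this
  have hfT : f T = 0 := by
    simp only [hf, hq]; field_simp; ring
  have hf1T : f1 T = 0 := by
    simp only [hf1, hq]; field_simp; linarith
  obtain ⟨K, hK⟩ := (isCompact_Icc (a := T / 2) (b := T)).exists_bound_of_continuousOn
    (f := f2) (by
      have hs : Set.Icc (T / 2) T ⊆ Set.Ioi 0 := fun t ht => by
        have := ht.1
        simp only [Set.mem_Ioi]; linarith
      exact ((FF_continuousOn hα1 _).mono hs).sub
        (continuousOn_const.mul ((FF_continuousOn hα1 _).mono hs)))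
  have hK0 : 0 ≤ K := (norm_nonneg _).trans (hK T ⟨by linarith, le_rfl⟩)
  have hb1 : ∀ u ∈ Set.Icc (T / 2) T, ‖f1 u‖ ≤ K * (T - u) := by
    intro u hu
    have := (convex_Icc (T / 2) T).norm_image_sub_le_of_norm_hasDerivWithin_le
      (f := f1) (f' := f2) (C := K)
      (fun x hx => (hdf1 x (by linarith [hx.1])).hasDerivWithinAt) hK
      (⟨by linarith, le_rfl⟩ : T ∈ Set.Icc (T / 2) T) hu
    rw [hf1T, sub_zero, Real.norm_eq_abs (u - T), abs_sub_comm,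
      abs_of_nonneg (by linarith [hu.2])] at this
    exact this
  have hb : ∀ u ∈ Set.Ioo (T / 2) T, f u ≤ K * (T - u) ^ 2 := by
    intro u hu
    have := (convex_Icc u T).norm_image_sub_le_of_norm_hasDerivWithin_le
      (f := f) (f' := f1) (C := K * (T - u))
      (fun x hx => (hdf x (by linarith [hx.1, hu.1])).hasDerivWithinAt)
      (fun x hx => (hb1 x ⟨by linarith [hx.1, hu.1], hx.2⟩).trans (by
        have := hx.1
        gcongr))
      (⟨hu.2.le, le_rfl⟩ : T ∈ Set.Icc u T) ⟨le_rfl, hu.2.le⟩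
    rw [hfT, sub_zero, Real.norm_eq_abs (u - T), abs_sub_comm,
      abs_of_nonneg (by linarith [hu.2])] at this
    calc f u ≤ ‖f u‖ := le_abs_self _
      _ ≤ _ := this
      _ = _ := by ring
  have hα10 : 0 < α - 1 := by linarith
  have hα0 : 0 < α := by linarith
  have hγ : 0 < 2 - α := by linarith
  have eγ : 2 - α - 1 = 1 - α := by ring
  have eΓ2 : Real.Gamma 2 = 1 := Real.Gamma_two
  have hexp : ∀ t u, ((t - u) ^ (1 - α) / Real.Gamma (2 - α) - lam * (t - u)) * f u =
      ((t - u) ^ (1 - α) / Real.Gamma (2 - α) * FF α lam (α - 1) u -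
        q * ((t - u) ^ (1 - α) / Real.Gamma (2 - α) * FF α lam α u)) -
      lam * ((t - u) * FF α lam (α - 1) u - q * ((t - u) * FF α lam α u)) := by
    intro t u
    simp only [hf]
    ring
  have j1 : ∀ β t, 0 < β → 0 < t → IntegrableOn
      (fun u => (t - u) ^ (1 - α) / Real.Gamma (2 - α) * FF α lam β u) (Set.Ioo 0 t) := by
    intro β t hβ ht
    have := FF_conv_integrable (lam := lam) hα1 hβ hγ ht
    rwa [eγ] at this
  have j2 : ∀ β t, 0 < β → 0 < t → IntegrableOn
      (fun u => (t - u) * FF α lam β u) (Set.Ioo 0 t) := by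
    intro β t hβ ht
    have := FF_conv_integrable (lam := lam) hα1 hβ two_pos ht
    simpa [eΓ2, show (2 : ℝ) - 1 = 1 by norm_num] using this
  have v1 : ∀ β t, 0 < β → 0 < t → ∫ u in Set.Ioo 0 t,
      (t - u) ^ (1 - α) / Real.Gamma (2 - α) * FF α lam β u = FF α lam (β + (2 - α)) t := by
    intro β t hβ ht
    have := FF_conv (lam := lam) hα1 hβ hγ ht
    rwa [eγ] at this
  have v2 : ∀ β t, 0 < β → 0 < t → ∫ u in Set.Ioo 0 t,
      (t - u) * FF α lam β u = FF α lam (β + 2) t := by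
    intro β t hβ ht
    have := FF_conv (lam := lam) hα1 hβ two_pos ht
    simpa [eΓ2, show (2 : ℝ) - 1 = 1 by norm_num] using this
  refine key_contra (f := f) (q := q) (lam := lam) hα1 hα2 (Real.Gamma_pos_of_pos hγ) hT hK0
    ?_ hb ?_ ?_ ?_
  · intro u hu
    have h1 := hanti ⟨hu.1, hu.2.le⟩ ⟨hT, le_rfl⟩ hu.2
    have hp := hpos u ⟨hu.1, hu.2.le⟩
    simp only at h1
    rw [lt_div_iff₀ hp] at h1
    simp only [hf]
    linarith
  · exact (FF_integrable hα1 hα10 hT).sub ((FF_integrable hα1 hα0 hT).const_mul q)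
  · intro t ht _
    simp_rw [hexp]
    exact ((j1 _ t hα10 ht).sub ((j1 _ t hα0 ht).const_mul q)).sub
      (((j2 _ t hα10 ht).sub ((j2 _ t hα0 ht).const_mul q)).const_mul lam)
  · intro t ht _
    simp_rw [hexp]
    have e1 := integral_sub ((j1 _ t hα10 ht).sub ((j1 _ t hα0 ht).const_mul q))
      (((j2 _ t hα10 ht).sub ((j2 _ t hα0 ht).const_mul q)).const_mul lam)
    simp only [Pi.sub_apply] at e1
    rw [e1, integral_sub (j1 _ t hα10 ht) ((j1 _ t hα0 ht).const_mul q), integral_const_mul,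
      integral_const_mul, integral_sub (j2 _ t hα10 ht) ((j2 _ t hα0 ht).const_mul q),
      integral_const_mul, v1 _ t hα10 ht, v1 _ t hα0 ht, v2 _ t hα10 ht, v2 _ t hα0 ht,
      show α - 1 + (2 - α) = 1 by ring, show α + (2 - α) = 2 by ring,
      FF_shift hα1 1 ht, FF_shift hα1 2 ht, show α - 1 + 2 = 1 + α by ring, add_comm α 2,
      eΓ2, Real.Gamma_one]
    norm_num
    ring

theorem MLc_continuous {α lam : ℝ} (hα : 1 < α) (β : ℝ) :
    Continuous fun u : ℝ => ML α β (lam * u ^ α) :=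
  (ML_continuous hα β).comp (continuous_const.mul
      (continuous_id.rpow_const fun x => Or.inr (by linarith)))

theorem logconc {α lam : ℝ} (hα1 : 1 < α) (hα2 : α ≤ 2)
    (hpos : ∀ t ∈ Set.Ioc 0 1, 0 < FF α lam α t) :
    ∀ t ∈ Set.Ioc (0 : ℝ) 1, FF α lam (α - 2) t * FF α lam α t < FF α lam (α - 1) t ^ 2 := by
  set n : ℝ → ℝ := fun t => ML α (α - 2) (lam * t ^ α) * ML α α (lam * t ^ α) -
    ML α (α - 1) (lam * t ^ α) ^ 2 with hn
  have hnc : Continuous n :=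
    ((MLc_continuous hα1 _).mul (MLc_continuous hα1 _)).sub ((MLc_continuous hα1 _).pow 2)
  have hn0 : n 0 < 0 := by
    simp only [hn]
    rw [Real.zero_rpow (by linarith), mul_zero, ML_zero, ML_zero, ML_zero]
    have h1 := inv_Gamma_sub_one (α - 1)
    have h2 := inv_Gamma_sub_one α
    rw [show α - 1 - 1 = α - 2 by ring] at h1
    have hG := Real.Gamma_pos_of_pos (by linarith : 0 < α)
    rw [h1, div_eq_mul_one_div, h2]
    have : (α - 2) * ((α - 1) / Real.Gamma α) * (1 / Real.Gamma α) - ((α - 1) / Real.Gamma α) ^ 2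
      = -(α - 1) / Real.Gamma α ^ 2 := by field_simp; ring
    rw [this]
    refine div_neg_of_neg_of_pos (by linarith) (by positivity)
  have hrel : ∀ t, 0 < t → FF α lam (α - 2) t * FF α lam α t - FF α lam (α - 1) t ^ 2 =
      t ^ (2 * α - 4) * n t := by
    intro t ht
    simp only [hn, FF]
    have e1 : t ^ (α - 2 - 1) * t ^ (α - 1) = t ^ (2 * α - 4) := by
      rw [← Real.rpow_add ht]; congr 1; ring
    have e2 : t ^ (α - 1 - 1) * t ^ (α - 1 - 1) = t ^ (2 * α - 4) := by
      rw [← Real.rpow_add ht]; congr 1; ring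
    calc _ = (t ^ (α - 2 - 1) * t ^ (α - 1)) *
            (ML α (α - 2) (lam * t ^ α) * ML α α (lam * t ^ α)) -
            (t ^ (α - 1 - 1) * t ^ (α - 1 - 1)) * ML α (α - 1) (lam * t ^ α) ^ 2 := by ring
      _ = _ := by rw [e1, e2]; ring
  have hiff : ∀ t, 0 < t →
      (FF α lam (α - 2) t * FF α lam α t < FF α lam (α - 1) t ^ 2 ↔ n t < 0) := by
    intro t ht
    have hp := Real.rpow_pos_of_pos ht (2 * α - 4)
    rw [← sub_neg, hrel t ht]
    constructor
    · intro h; by_contra! h'; nlinarith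
    · intro h; nlinarith
  intro t0 ht0
  rw [hiff t0 ht0.1]
  rcases hα2.lt_or_eq with hlt | rfl
  · by_contra! hbad
    set S := Set.Icc 0 t0 ∩ n ⁻¹' Set.Ici 0 with hS
    have hSc : IsCompact S := isCompact_Icc.inter_right (isClosed_Ici.preimage hnc)
    obtain ⟨T, hTS, hTmin⟩ := hSc.exists_isLeast ⟨t0, ⟨ht0.1.le, le_rfl⟩, hbad⟩
    have hT0 : 0 < T := by
      rcases hTS.1.1.lt_or_eq with h | h
      · exact h
      · have h2 : 0 ≤ n T := hTS.2
        rw [← h] at h2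
        linarith
    have hlow : ∀ t ∈ Set.Ico 0 T, n t < 0 := by
      intro t ht
      by_contra! h'
      have := hTmin ⟨⟨ht.1, ht.2.le.trans hTS.1.2⟩, h'⟩
      linarith [ht.2]
    have hnT : n T = 0 := by
      refine le_antisymm ?_ hTS.2
      refine ContinuousWithinAt.closure_le (s := Set.Ico 0 T) (f := n) (g := fun _ => 0) ?_
        hnc.continuousWithinAt continuousWithinAt_const (fun t ht => (hlow t ht).le)
      rw [closure_Ico hT0.ne]
      exact ⟨hT0.le, le_rfl⟩
    have hT1 : T ≤ 1 := hTS.1.2.trans ht0.2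
    refine logconc_ne hα1 hlt hT0 (fun t ht => hpos t ⟨ht.1, ht.2.trans hT1⟩)
      (fun t ht => (hiff t ht.1).2 (hlow t ⟨ht.1.le, ht.2⟩)) ?_
    have := hrel T hT0
    rw [hnT, mul_zero] at this
    linarith
  · have hder : ∀ t, 0 < t → HasDerivAt n 0 t := by
      intro t ht
      have h1 : HasDerivAt (fun t => FF 2 lam 0 t * FF 2 lam 2 t - FF 2 lam 1 t ^ 2)
          (FF 2 lam (0 - 1) t * FF 2 lam 2 t + FF 2 lam 0 t * FF 2 lam (2 - 1) t
            - ((2 : ℕ) : ℝ) * FF 2 lam 1 t ^ (2 - 1) * FF 2 lam (1 - 1) t) t :=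
        ((FF_hasDerivAt hα1 0 ht).mul (FF_hasDerivAt hα1 2 ht)).sub
          ((FF_hasDerivAt hα1 1 ht).pow 2)
      have s1 : FF 2 lam (0 - 1) t = lam * FF 2 lam 1 t := by
        rw [FF_shift hα1 _ ht, show (0 : ℝ) - 1 = -1 by norm_num]
        have : Real.Gamma (-1) = 0 := by simpa using Real.Gamma_neg_nat_eq_zero 1
        rw [this]
        norm_num
      have s2 : FF 2 lam 0 t = lam * FF 2 lam 2 t := by
        rw [FF_shift hα1 _ ht, Real.Gamma_zero]
        norm_num
      have h2 := h1.congr_deriv (g' := 0) (by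
        rw [s1, show (1 : ℝ) - 1 = 0 by norm_num, show (2 : ℝ) - 1 = 1 by norm_num, s2]
        push_cast
        ring)
      refine h2.congr_of_eventuallyEq ?_
      filter_upwards [lt_mem_nhds ht] with z hz
      have := hrel z hz
      norm_num at this
      exact this.symm
    have : n t0 = n 0 := by
      obtain ⟨c, hc, h⟩ := exists_hasDerivAt_eq_slope n (fun _ => 0) ht0.1 hnc.continuousOn
        (fun x hx => hder x hx.1)
      have h0 := ht0.1
      have h3 : t0 - 0 ≠ 0 := by linarith
      rw [eq_comm, div_eq_zero_iff] at h
      rcases h with h | h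
      · linarith
      · exact absurd h h3
    rw [this]
    exact hn0

theorem rpow_lip {α : ℝ} (hα : 1 < α) {x y : ℝ} (hx : x ∈ Set.Icc (0 : ℝ) 1)
    (hy : y ∈ Set.Icc (0 : ℝ) 1) : |x ^ α - y ^ α| ≤ α * |x - y| := by
  have := (convex_Icc (0 : ℝ) 1).norm_image_sub_le_of_norm_hasDerivWithin_le
    (f := fun t : ℝ => t ^ α) (f' := fun t => α * t ^ (α - 1)) (C := α)
    (fun t _ => (Real.hasDerivAt_rpow_const (Or.inr hα.le)).hasDerivWithinAt)
    (fun t ht => by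
      have h1 := Real.rpow_nonneg ht.1 (α - 1)
      have h2 := Real.rpow_le_one ht.1 ht.2 (by linarith : 0 ≤ α - 1)
      rw [Real.norm_eq_abs, abs_of_nonneg (by positivity)]
      nlinarith) hy hx
  exact this

theorem MLc_lip {α lam : ℝ} (hα : 1 < α) (β : ℝ) : ∃ C : ℝ, 0 ≤ C ∧
    ∀ x ∈ Set.Icc (0 : ℝ) 1, ∀ y ∈ Set.Icc (0 : ℝ) 1,
      |ML α β (lam * x ^ α) - ML α β (lam * y ^ α)| ≤ C * |x - y| := by
  obtain ⟨C, hC, h⟩ := ML_lip hα β |lam| (abs_nonneg _)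
  refine ⟨C * (|lam| * α), by positivity, fun x hx y hy => ?_⟩
  have hb : ∀ x ∈ Set.Icc (0 : ℝ) 1, |lam * x ^ α| ≤ |lam| := by
    intro x hx
    rw [abs_mul, abs_of_nonneg (Real.rpow_nonneg hx.1 _)]
    exact mul_le_of_le_one_right (abs_nonneg _) (Real.rpow_le_one hx.1 hx.2 (by linarith))
  refine (h _ _ (hb x hx) (hb y hy)).trans ?_
  rw [← mul_sub, abs_mul, mul_assoc, mul_assoc]
  have := rpow_lip hα hx hy
  gcongr

theorem B_pos {α lam lam1 : ℝ} (hα1 : 1 < α)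
    (hlam1 : IsGreatest {μ : ℝ | ML α (α - 1) μ = 0} lam1) (hlam : lam1 < lam) :
    ∀ t ∈ Set.Icc (0 : ℝ) 1, 0 < ML α (α - 1) (lam * t ^ α) := by
  have hneg : lam1 < 0 := by
    by_contra! h
    have := ML_pos_of_nonneg hα1 (by linarith : 0 < α - 1) h
    have h2 : ML α (α - 1) lam1 = 0 := hlam1.1
    linarith
  have hp : ∀ x, lam1 < x → 0 < ML α (α - 1) x := by
    intro x hx
    by_contra! hle
    have h0 := ML_pos_of_nonneg hα1 (by linarith : 0 < α - 1) le_rfl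
    obtain ⟨z, hz, hz0⟩ := isPreconnected_Ioi.intermediate_value (s := Set.Ioi lam1)
      (f := ML α (α - 1)) hx hneg (ML_continuous hα1 _).continuousOn ⟨hle, h0.le⟩
    have := hlam1.2 hz0
    simp only [Set.mem_Ioi] at hz
    linarith
  intro t ht
  apply hp
  have h1 := Real.rpow_nonneg ht.1 α
  have h2 := Real.rpow_le_one ht.1 ht.2 (by linarith : 0 ≤ α)
  rcases le_total 0 lam with h | h
  · nlinarith [mul_nonneg h h1]
  · nlinarith

theorem FFa_pos {α lam : ℝ} (hα1 : 1 < α)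
    (hB : ∀ t ∈ Set.Icc (0 : ℝ) 1, 0 < ML α (α - 1) (lam * t ^ α)) :
    ∀ t ∈ Set.Ioc (0 : ℝ) 1, 0 < FF α lam α t := by
  have hmono : StrictMonoOn (FF α lam α) (Set.Icc 0 1) := by
    refine strictMonoOn_of_deriv_pos (convex_Icc 0 1) ?_ ?_
    · refine Continuous.continuousOn ?_
      exact (continuous_id.rpow_const fun x => Or.inr (by linarith)).mul (MLc_continuous hα1 α)
    · intro t ht
      rw [interior_Icc] at ht
      rw [(FF_hasDerivAt hα1 α ht.1).deriv]
      exact mul_pos (Real.rpow_pos_of_pos ht.1 _) (hB t ⟨ht.1.le, ht.2.le⟩)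
  intro t ht
  have := hmono ⟨le_rfl, zero_le_one⟩ ⟨ht.1.le, ht.2⟩ ht.1
  rwa [FF, Real.zero_rpow (by linarith), zero_mul] at this

theorem ratio_anti {α lam : ℝ} (hα1 : 1 < α)
    (hpos : ∀ t ∈ Set.Ioc (0 : ℝ) 1, 0 < FF α lam α t)
    (hlc : ∀ t ∈ Set.Ioc (0 : ℝ) 1,
      FF α lam (α - 2) t * FF α lam α t < FF α lam (α - 1) t ^ 2) :
    StrictAntiOn (fun t => FF α lam (α - 1) t / FF α lam α t) (Set.Ioc 0 1) := by
  refine strictAntiOn_of_deriv_neg (convex_Ioc 0 1) ?_ ?_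
  · refine ContinuousOn.div ((FF_continuousOn hα1 _).mono fun t ht => ht.1)
      ((FF_continuousOn hα1 _).mono fun t ht => ht.1) fun t ht => (hpos t ht).ne'
  · intro t ht
    rw [interior_Ioc] at ht
    have hp := hpos t ⟨ht.1, ht.2.le⟩
    have := (FF_hasDerivAt (lam := lam) hα1 (α - 1) ht.1).div
      (FF_hasDerivAt (lam := lam) hα1 α ht.1) hp.ne'
    have e := this.deriv
    rw [show α - 1 - 1 = α - 2 by ring] at e
    have e' : deriv (fun t => FF α lam (α - 1) t / FF α lam α t) t = _ := e
    rw [e']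
    refine div_neg_of_neg_of_pos ?_ (by positivity)
    have := hlc t ⟨ht.1, ht.2.le⟩
    nlinarith

theorem shift_ratio {α lam : ℝ} (hα1 : 1 < α)
    (hpos : ∀ t ∈ Set.Ioc (0 : ℝ) 1, 0 < FF α lam α t)
    (hanti : StrictAntiOn (fun t => FF α lam (α - 1) t / FF α lam α t) (Set.Ioc 0 1))
    {s t : ℝ} (hs : 0 < s) (hst : s < t) (ht : t ≤ 1) :
    FF α lam α (t - s) / FF α lam α t ≤ FF α lam α (1 - s) / FF α lam α 1 := by
  have hd : ∀ x, s < x → HasDerivAt (fun x => FF α lam α (x - s)) (FF α lam (α - 1) (x - s)) x := by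
    intro x hx
    have := (FF_hasDerivAt (lam := lam) hα1 α (by linarith : 0 < x - s)).comp x
      ((hasDerivAt_id x).sub_const s)
    simpa [Function.comp_def] using this
  have hd2 : ∀ x ∈ Set.Icc t 1, HasDerivAt (fun x => FF α lam α (x - s) / FF α lam α x) _ x :=
    fun x hx => (hd x (by linarith [hx.1])).div
      (FF_hasDerivAt (lam := lam) hα1 α (by linarith [hx.1] : 0 < x))
      (hpos x ⟨by linarith [hx.1], hx.2⟩).ne'
  have hmono : MonotoneOn (fun x => FF α lam α (x - s) / FF α lam α x) (Set.Icc t 1) := by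
    refine monotoneOn_of_deriv_nonneg (convex_Icc t 1)
      (fun x hx => (hd2 x hx).continuousAt.continuousWithinAt)
      (fun x hx => (hd2 x (interior_subset hx)).differentiableAt.differentiableWithinAt) ?_
    intro x hx
    have hx' := interior_subset hx
    rw [(hd2 x hx').deriv]
    have m1 : x - s ∈ Set.Ioc (0 : ℝ) 1 := ⟨by linarith [hx'.1], by linarith [hx'.2]⟩
    have m2 : x ∈ Set.Ioc (0 : ℝ) 1 := ⟨by linarith [hx'.1], hx'.2⟩
    have h1 := hanti m1 m2 (by linarith)
    simp only at h1
    rw [div_lt_div_iff₀ (hpos _ m2) (hpos _ m1)] at h1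
    refine div_nonneg ?_ (sq_nonneg _)
    linarith
  exact hmono ⟨le_rfl, ht⟩ ⟨ht, le_rfl⟩ ht

theorem r_bound {α lam : ℝ} (hα1 : 1 < α)
    (hB : ∀ t ∈ Set.Icc (0 : ℝ) 1, 0 < ML α (α - 1) (lam * t ^ α))
    (hA : ∀ t ∈ Set.Icc (0 : ℝ) 1, 0 < ML α α (lam * t ^ α))
    (hlc : ∀ t ∈ Set.Ioc (0 : ℝ) 1,
      FF α lam (α - 2) t * FF α lam α t < FF α lam (α - 1) t ^ 2)
    (hanti : StrictAntiOn (fun t => FF α lam (α - 1) t / FF α lam α t) (Set.Ioc 0 1)) :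
    ∃ c : ℝ, 0 < c ∧ ∀ x ∈ Set.Icc (0 : ℝ) 1,
      c * (1 - x) ≤ ML α (α - 1) (lam * x ^ α) * ML α α lam
        - x * ML α α (lam * x ^ α) * ML α (α - 1) lam := by
  set r : ℝ → ℝ := fun x => ML α (α - 1) (lam * x ^ α) * ML α α lam
        - x * ML α α (lam * x ^ α) * ML α (α - 1) lam with hr
  have hrc : Continuous r :=
    ((MLc_continuous hα1 _).mul continuous_const).sub
      ((continuous_id.mul (MLc_continuous hα1 _)).mul continuous_const)
  have hr1 : r 1 = 0 := by simp only [hr, Real.one_rpow, mul_one]; ring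
  have F1 : ∀ β, FF α lam β 1 = ML α β lam := fun β => by simp [FF]
  have hA1 : 0 < ML α α lam := by simpa using hA 1 ⟨zero_le_one, le_rfl⟩
  have hB1 : 0 < ML α (α - 1) lam := by simpa using hB 1 ⟨zero_le_one, le_rfl⟩
  have hrel : ∀ x, 0 < x → r x =
      x ^ (2 - α) * (FF α lam (α - 1) x * ML α α lam - FF α lam α x * ML α (α - 1) lam) := by
    intro x hx
    have e1 : x ^ (2 - α) * x ^ (α - 1 - 1) = 1 := by
      rw [← Real.rpow_add hx]; ring_nf; exact Real.rpow_zero x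
    have e2 : x ^ (2 - α) * x ^ (α - 1) = x := by
      rw [← Real.rpow_add hx]; ring_nf; exact Real.rpow_one x
    simp only [hr, FF]
    calc _ = 1 * (ML α (α - 1) (lam * x ^ α) * ML α α lam)
        - x * ML α α (lam * x ^ α) * ML α (α - 1) lam := by ring
      _ = (x ^ (2 - α) * x ^ (α - 1 - 1)) * (ML α (α - 1) (lam * x ^ α) * ML α α lam)
        - (x ^ (2 - α) * x ^ (α - 1)) * ML α α (lam * x ^ α) * ML α (α - 1) lam := by rw [e1, e2]
      _ = _ := by ring
  have hrpos : ∀ x ∈ Set.Ico (0 : ℝ) 1, 0 < r x := by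
    intro x hx
    rcases hx.1.lt_or_eq with h | h
    · rw [hrel x h]
      have h1 := hanti ⟨h, hx.2.le⟩ ⟨zero_lt_one, le_rfl⟩ hx.2
      have hp : 0 < FF α lam α x :=
        mul_pos (Real.rpow_pos_of_pos h _) (hA x ⟨h.le, hx.2.le⟩)
      simp only [F1] at h1
      rw [div_lt_div_iff₀ hA1 hp] at h1
      exact mul_pos (Real.rpow_pos_of_pos h _) (by linarith)
    · rw [← h]
      have := hB 0 ⟨le_rfl, zero_le_one⟩
      simp only [hr, zero_mul, sub_zero]
      exact mul_pos this hA1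
  have hder : HasDerivAt r
      (ML α (α - 2) lam * ML α α lam - ML α (α - 1) lam ^ 2) 1 := by
    have h1 := (Real.hasDerivAt_rpow_const (x := 1) (p := 2 - α) (Or.inl one_ne_zero)).mul
      (((FF_hasDerivAt (lam := lam) hα1 (α - 1) one_pos).mul_const (ML α α lam)).sub
      ((FF_hasDerivAt (lam := lam) hα1 α one_pos).mul_const (ML α (α - 1) lam)))
    have h2 := h1.congr_deriv (g' := ML α (α - 2) lam * ML α α lam - ML α (α - 1) lam ^ 2) (by
      simp only [F1, Pi.sub_apply, Real.one_rpow, show α - 1 - 1 = α - 2 by ring]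
      ring)
    refine h2.congr_of_eventuallyEq ?_
    filter_upwards [lt_mem_nhds (one_pos : (0 : ℝ) < 1)] with z hz
    rw [hrel z hz]
    rfl
  have hdneg : ML α (α - 2) lam * ML α α lam - ML α (α - 1) lam ^ 2 < 0 := by
    have := hlc 1 ⟨zero_lt_one, le_rfl⟩
    simp only [F1] at this
    linarith
  have hds : ContinuousOn (dslope r 1) (Set.Icc 0 1) :=
    ((continuousOn_dslope Filter.univ_mem).2
      ⟨hrc.continuousOn, hder.differentiableAt⟩).mono (Set.subset_univ _)
  obtain ⟨x0, hx0, hmax⟩ := isCompact_Icc.exists_isMaxOn (⟨0, by simp⟩ : (Set.Icc (0 : ℝ) 1).Nonempty)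
    hds
  have hneg : ∀ x ∈ Set.Icc (0 : ℝ) 1, dslope r 1 x < 0 := by
    intro x hx
    rcases hx.2.lt_or_eq with h | h
    · rw [dslope_of_ne _ h.ne, slope_def_field, hr1, sub_zero]
      exact div_neg_of_pos_of_neg (hrpos x ⟨hx.1, h⟩) (by linarith)
    · rw [h, dslope_same, hder.deriv]
      exact hdneg
  refine ⟨-dslope r 1 x0, by linarith [hneg x0 hx0], fun x hx => ?_⟩
  change _ ≤ r x
  have h1 : dslope r 1 x ≤ dslope r 1 x0 := hmax hx
  rcases hx.2.lt_or_eq with h | h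
  · rw [dslope_of_ne _ h.ne, slope_def_field, hr1, sub_zero, div_le_iff_of_neg (by linarith)] at h1
    linarith
  · rw [h, hr1]; simp

set_option maxHeartbeats 2000000 in
theorem stmt9 (α lam lam1 : ℝ) (hα1 : 1 < α) (hα2 : α ≤ 2)
    (hlam1 : IsGreatest {μ : ℝ | ML α (α - 1) μ = 0} lam1) (hlam : lam1 < lam) :
    ∃ M : ℝ, 0 < M ∧ ∃ m : ℝ → ℝ, ContinuousOn m (Set.Icc 0 1) ∧ m 0 = 0 ∧
      (∀ t ∈ Set.Ioc (0:ℝ) 1, 0 < m t) ∧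
      ∀ t ∈ Set.Ioo (0:ℝ) 1, ∀ s ∈ Set.Ioo (0:ℝ) 1,
        m t ≤ t ^ (2 - α) * greenG α lam t s / (s * (1 - s) ^ (α - 2)) ∧
        t ^ (2 - α) * greenG α lam t s / (s * (1 - s) ^ (α - 2)) ≤ M := by
  have hB := B_pos hα1 hlam1 hlam
  have hFpos := FFa_pos hα1 hB
  have hlc := logconc hα1 hα2 hFpos
  have hanti := ratio_anti hα1 hFpos hlc
  have hA : ∀ t ∈ Set.Icc (0 : ℝ) 1, 0 < ML α α (lam * t ^ α) := by
    intro t ht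
    rcases ht.1.lt_or_eq with h | h
    · have h1 := hFpos t ⟨h, ht.2⟩
      exact pos_of_mul_pos_right h1 (Real.rpow_nonneg h.le _)
    · rw [← h, Real.zero_rpow (by linarith), mul_zero]
      exact ML_pos_of_nonneg hα1 (by linarith) le_rfl
  obtain ⟨c0, hc0, hr⟩ := r_bound hα1 hB hA hlc hanti
  have hne : (Set.Icc (0 : ℝ) 1).Nonempty := ⟨0, by simp⟩
  obtain ⟨a0, ha0, hAmin⟩ : ∃ a0 : ℝ, 0 < a0 ∧
      ∀ t ∈ Set.Icc (0 : ℝ) 1, a0 ≤ ML α α (lam * t ^ α) := by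
    obtain ⟨x, hx, h⟩ := isCompact_Icc.exists_isMinOn hne
      (MLc_continuous (lam := lam) hα1 α).continuousOn
    exact ⟨_, hA x hx, fun t ht => h ht⟩
  obtain ⟨b0, hb0, hBmin⟩ : ∃ b0 : ℝ, 0 < b0 ∧
      ∀ t ∈ Set.Icc (0 : ℝ) 1, b0 ≤ ML α (α - 1) (lam * t ^ α) := by
    obtain ⟨x, hx, h⟩ := isCompact_Icc.exists_isMinOn hne
      (MLc_continuous (lam := lam) hα1 (α - 1)).continuousOn
    exact ⟨_, hB x hx, fun t ht => h ht⟩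
  obtain ⟨a1, ha1, hAmax⟩ : ∃ a1 : ℝ, 0 < a1 ∧
      ∀ t ∈ Set.Icc (0 : ℝ) 1, ML α α (lam * t ^ α) ≤ a1 := by
    obtain ⟨x, hx, h⟩ := isCompact_Icc.exists_isMaxOn hne
      (MLc_continuous (lam := lam) hα1 α).continuousOn
    exact ⟨_, hA x hx, fun t ht => h ht⟩
  obtain ⟨b1, hb1, hBmax⟩ : ∃ b1 : ℝ, 0 < b1 ∧
      ∀ t ∈ Set.Icc (0 : ℝ) 1, ML α (α - 1) (lam * t ^ α) ≤ b1 := by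
    obtain ⟨x, hx, h⟩ := isCompact_Icc.exists_isMaxOn hne
      (MLc_continuous (lam := lam) hα1 (α - 1)).continuousOn
    exact ⟨_, hB x hx, fun t ht => h ht⟩
  obtain ⟨LA, hLA, hlipA⟩ := MLc_lip (lam := lam) hα1 α
  obtain ⟨LB, hLB, hlipB⟩ := MLc_lip (lam := lam) hα1 (α - 1)
  have hA1 : 0 < ML α α lam := by simpa using hA 1 ⟨zero_le_one, le_rfl⟩
  have hB1 : 0 < ML α (α - 1) lam := by simpa using hB 1 ⟨zero_le_one, le_rfl⟩
  set A1 := ML α α lam with hA1d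
  set B1 := ML α (α - 1) lam with hB1d
  set c1 := a0 * c0 / (A1 * B1) with hc1
  set c2 := a0 * b0 / B1 with hc2
  have hc1p : 0 < c1 := by positivity
  have hc2p : 0 < c2 := by positivity
  refine ⟨a1 * LB / B1 + LA + a1 + a1 * b1 / B1, by positivity, fun t => min c1 c2 * t,
    by fun_prop, by simp, fun t ht => mul_pos (lt_min hc1p hc2p) ht.1, fun t ht s hs => ?_⟩
  have hs1 : 0 < 1 - s := by linarith [hs.2]
  have ht0 := ht.1
  have hs0 := hs.1
  have mt : t ∈ Set.Icc (0 : ℝ) 1 := ⟨ht.1.le, ht.2.le⟩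
  have ms : 1 - s ∈ Set.Icc (0 : ℝ) 1 := ⟨hs1.le, by linarith⟩
  have hD : 0 < (1 - s) ^ (2 - α) := Real.rpow_pos_of_pos hs1 _
  have hp : 0 < t ^ (2 - α) := Real.rpow_pos_of_pos ht0 _
  have hDinv : (1 - s) ^ (α - 2) = ((1 - s) ^ (2 - α))⁻¹ := by
    rw [← Real.rpow_neg hs1.le]; congr 1; ring
  have e1 : t ^ (2 - α) * t ^ (α - 1) = t := by
    rw [← Real.rpow_add ht0]; ring_nf; exact Real.rpow_one t
  have e2 : (1 - s) ^ (2 - α) * (1 - s) ^ (α - 1) = 1 - s := by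
    rw [← Real.rpow_add hs1, show 2 - α + (α - 1) = 1 by ring, Real.rpow_one]
  have hAt := hA t mt
  have hBs := hB _ ms
  have hAt0 := hAmin t mt
  have hBs0 := hBmin _ ms
  have hAt1 := hAmax t mt
  have hBs1 := hBmax _ ms
  set D := (1 - s) ^ (2 - α) with hDd
  set p := t ^ (2 - α) with hpd
  set At := ML α α (lam * t ^ α) with hAtd
  set Bs := ML α (α - 1) (lam * (1 - s) ^ α) with hBsd
  have hX : p * (t ^ (α - 1) * At * Bs / (D * B1)) / (s * D⁻¹) = t * At * Bs / B1 / s := by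
    calc _ = (p * t ^ (α - 1)) * At * Bs / B1 / s := by field_simp
      _ = _ := by rw [e1]
  rw [hDinv]
  rcases le_or_gt s t with hst | hst
  · rw [greenG, if_pos hst]
    have mts : t - s ∈ Set.Icc (0 : ℝ) 1 := ⟨by linarith, by linarith [ht.2]⟩
    have hP : p * (t ^ (α - 1) * At * Bs / (D * B1) -
        (t - s) ^ (α - 1) * ML α α (lam * (t - s) ^ α)) / (s * D⁻¹) =
        (t * At * Bs / B1 - p * D * (t - s) ^ (α - 1) * ML α α (lam * (t - s) ^ α)) / s := by
      rw [mul_sub, sub_div, hX, sub_div]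
      congr 1
      field_simp
    rw [hP]
    have hAts := hA _ mts
    have hAts1 := hAmax _ mts
    have hlA := hlipA t mt (t - s) mts
    have hlB := hlipB (1 - s) ms 1 ⟨zero_le_one, le_rfl⟩
    rw [Real.one_rpow, mul_one, ← hB1d, ← hBsd, show (1 - s - 1 : ℝ) = -s by ring, abs_neg,
      abs_of_pos hs0] at hlB
    rw [← hAtd, show t - (t - s) = s by ring, abs_of_pos hs0] at hlA
    have hsr := fun h : s < t => shift_ratio hα1 hFpos hanti hs0 h ht.2.le
    unfold FF at hsr
    set Ats := ML α α (lam * (t - s) ^ α) with hAtsd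
    constructor
    · rw [le_div_iff₀ hs0]
      have key : p * D * (t - s) ^ (α - 1) * Ats ≤
          t * At * ((1 - s) * ML α α (lam * (1 - s) ^ α) / A1) := by
        rcases hst.lt_or_eq with h | h
        · have h1 := hsr h
          rw [Real.one_rpow, Real.one_rpow, mul_one, one_mul, ← hA1d, div_le_iff₀
            (mul_pos (Real.rpow_pos_of_pos ht0 _) hAt)] at h1
          calc p * D * (t - s) ^ (α - 1) * Ats = p * D * ((t - s) ^ (α - 1) * Ats) := by ring
            _ ≤ p * D * ((1 - s) ^ (α - 1) * ML α α (lam * (1 - s) ^ α) / A1 *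
                (t ^ (α - 1) * At)) := by gcongr
            _ = (p * t ^ (α - 1)) * At *
                ((D * (1 - s) ^ (α - 1)) * ML α α (lam * (1 - s) ^ α) / A1) := by ring
            _ = _ := by rw [e1, e2]
        · rw [h, sub_self, Real.zero_rpow (by linarith)]
          have := hA (1 - t) (h ▸ ms)
          have h3 : 0 < 1 - t := by linarith [ht.2]
          simp only [mul_zero, zero_mul]
          positivity
      have h2 := hr (1 - s) ms
      rw [show 1 - (1 - s) = s by ring, ← hBsd] at h2
      have h3 : t * At * Bs / B1 - t * At * ((1 - s) * ML α α (lam * (1 - s) ^ α) / A1) =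
          t * At * (Bs * A1 - (1 - s) * ML α α (lam * (1 - s) ^ α) * B1) / (A1 * B1) := by
        field_simp
      have h4 : c1 * t * s ≤
          t * At * (Bs * A1 - (1 - s) * ML α α (lam * (1 - s) ^ α) * B1) / (A1 * B1) := by
        calc c1 * t * s = t * a0 * (c0 * s) / (A1 * B1) := by rw [hc1]; ring
          _ ≤ _ := by gcongr
      have h5 : min c1 c2 * t * s ≤ c1 * t * s := by
        gcongr
        exact min_le_left _ _
      linarith
    · rw [div_le_iff₀ hs0]
      have hW : t - s ≤ p * D * (t - s) ^ (α - 1) := by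
        rcases hst.lt_or_eq with h | h
        · have hts : 0 < t - s := by linarith
          have h1 : (t - s) ^ (2 - α) ≤ p * D := by
            rw [hpd, hDd, ← Real.mul_rpow ht0.le hs1.le]
            refine Real.rpow_le_rpow hts.le ?_ (by linarith)
            nlinarith [ht.2]
          calc t - s = (t - s) ^ (2 - α) * (t - s) ^ (α - 1) := by
                rw [← Real.rpow_add hts, show 2 - α + (α - 1) = 1 by ring, Real.rpow_one]
            _ ≤ _ := by gcongr
        · rw [h, sub_self, Real.zero_rpow (by linarith), mul_zero]
      have hW2 : (t - s) * Ats ≤ p * D * (t - s) ^ (α - 1) * Ats := by gcongr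
      have h1 : t * At * Bs / B1 - (t - s) * Ats =
          t * At * (Bs - B1) / B1 + t * (At - Ats) + s * Ats := by field_simp; ring
      have h2 : t * At * (Bs - B1) / B1 ≤ a1 * LB / B1 * s := by
        calc t * At * (Bs - B1) / B1 ≤ 1 * a1 * (LB * s) / B1 := by
              have h3 := (le_abs_self _).trans hlB
              have h4 : t * At ≤ 1 * a1 := by
                have := ht.2.le
                gcongr
              have h5 : t * At * (Bs - B1) ≤ t * At * (LB * s) := by gcongr
              have h6 : t * At * (LB * s) ≤ 1 * a1 * (LB * s) := by gcongr
              exact div_le_div_of_nonneg_right (h5.trans h6) hB1.le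
          _ = _ := by ring
      have h3 : t * (At - Ats) ≤ LA * s := by
        have h4 := (le_abs_self _).trans hlA
        have h5 : t * (At - Ats) ≤ t * (LA * s) := by gcongr
        have h6 : t * (LA * s) ≤ 1 * (LA * s) := by
          have := ht.2.le
          gcongr
        linarith
      have h4 : s * Ats ≤ a1 * s := by
        rw [mul_comm a1 s]; exact mul_le_mul_of_nonneg_left hAts1 hs0.le
      have h5 : 0 ≤ a1 * b1 / B1 * s := by positivity
      linarith
  · rw [greenG, if_neg (by linarith), hX]
    constructor
    · rw [le_div_iff₀ hs0]
      calc min c1 c2 * t * s ≤ c2 * t * 1 := by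
            have := hs.2.le
            gcongr
            exact min_le_right _ _
        _ = t * a0 * b0 / B1 := by rw [hc2]; ring
        _ ≤ _ := by gcongr
    · rw [div_le_iff₀ hs0]
      have h1 : t * At * Bs / B1 ≤ s * a1 * b1 / B1 := by gcongr
      have h2 : 0 ≤ (a1 * LB / B1 + LA + a1) * s := by positivity
      have h3 : s * a1 * b1 / B1 = a1 * b1 / B1 * s := by ring
      linarith
end
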